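/- In every 4-connected graph with δ ≥ α, the circumference satisfies c ≥ min{n, 4δ − 2κ}. -/

import Mathlib

open SimpleGraph

variable {V : Type*}

/-- `G` is `k`-connected: more than `k` vertices and removing fewer than `k`
vertices leaves a connected graph. -/
def KConnected (G : SimpleGraph V) [Fintype V] (k : ℕ) : Prop :=
  k < Fintype.card V ∧
    ∀ S : Finset V, S.card < k → (G.induce ((↑S : Set V)ᶜ)).Connected

/-- vertex connectivity `κ`. -/
noncomputable def connectivity (G : SimpleGraph V) [Fintype V] : ℕ :=
  sSup {k | KConnected G k}

/-- independence number `α`. -/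
noncomputable def indepNumber (G : SimpleGraph V) [Fintype V] : ℕ :=
  sSup {k | ∃ s : Finset V, (∀ u ∈ s, ∀ v ∈ s, ¬ G.Adj u v) ∧ s.card = k}

/-- circumference `c`: length of a longest cycle. -/
noncomputable def circumference (G : SimpleGraph V) [Fintype V] : ℕ :=
  sSup {n | ∃ (v : V) (w : G.Walk v v), w.IsCycle ∧ w.length = n}

/-- `w` is a longest cycle of `G`. -/
def IsLongestCycle {G : SimpleGraph V} {v : V} (w : G.Walk v v) : Prop :=
  w.IsCycle ∧ ∀ (u : V) (w' : G.Walk u u), w'.IsCycle → w'.length ≤ w.length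

/-- dominating cycle: every edge has an endpoint on the cycle. -/
def IsDominatingCycle {G : SimpleGraph V} {v : V} (w : G.Walk v v) : Prop :=
  w.IsCycle ∧ ∀ x y, G.Adj x y → x ∈ w.support ∨ y ∈ w.support

/-- generalized cycle of length `n` with vertex set `W`: single vertices are
cycles of length 1, edges are cycles of length 2. -/
def ExtCycle (G : SimpleGraph V) (W : Set V) (n : ℕ) : Prop :=
  (n = 1 ∧ ∃ v : V, W = {v}) ∨
  (n = 2 ∧ ∃ u v : V, G.Adj u v ∧ W = {u, v}) ∨
  (3 ≤ n ∧ ∃ (v : V) (w : G.Walk v v), w.IsCycle ∧ w.length = n ∧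
      W = {x | x ∈ w.support})

/-- `p̄`: the length of a longest path in `G \ C`. -/
noncomputable def pathBar (G : SimpleGraph V) [Fintype V] {v : V} (w : G.Walk v v) : ℕ :=
  sSup {n | ∃ (a b : {x : V | x ∉ w.support})
      (p : (G.induce {x : V | x ∉ w.support}).Walk a b), p.IsPath ∧ p.length = n}

/-- `c̄`: the length of a longest (generalized) cycle in `G \ C`. -/
noncomputable def cycBar (G : SimpleGraph V) [Fintype V] {v : V} (w : G.Walk v v) : ℕ :=
  sSup {n | ∃ W, ExtCycle (G.induce {x : V | x ∉ w.support}) W n}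

/-- `CD_m`-cycle: every (generalized) cycle of length at least `m` meets `w`. -/
def IsCDCycle (G : SimpleGraph V) {v : V} (w : G.Walk v v) (m : ℕ) : Prop :=
  w.IsCycle ∧ ∀ (W : Set V) (n : ℕ), ExtCycle G W n → m ≤ n → ∃ x ∈ W, x ∈ w.support

set_option linter.unusedSectionVars false
set_option linter.unusedVariables false
set_option linter.unusedSimpArgs false

namespace Nik
section
variable {V : Type*} [Fintype V] [DecidableEq V] {G : SimpleGraph V}

/-- `l` is (the vertex list of) a path from `s` to `t` inside `W`. -/
def IsPth (G : SimpleGraph V) (W : Finset V) (s t : V) (l : List V) : Prop :=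
  l.IsChain G.Adj ∧ l.Nodup ∧ l.head? = some s ∧ l.getLast? = some t ∧ ∀ v ∈ l, v ∈ W

theorem IsPth.mono {W W' : Finset V} {s t : V} {l : List V} (h : IsPth G W s t l) (hW : W ⊆ W') :
    IsPth G W' s t l :=
  ⟨h.1, h.2.1, h.2.2.1, h.2.2.2.1, fun v hv => hW (h.2.2.2.2 v hv)⟩

theorem IsPth.rev {W : Finset V} {s t : V} {l : List V} (h : IsPth G W s t l) :
    IsPth G W t s l.reverse := by
  obtain ⟨h1, h2, h3, h4, h5⟩ := h
  refine ⟨?_, by simpa using h2, by simpa using h4, by simpa using h3, by simpa using h5⟩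
  rw [List.isChain_reverse]
  exact h1.imp fun a b hab => hab.symm

theorem IsPth.append {W W' : Finset V} {s t s' t' : V} {l l' : List V} (h : IsPth G W s t l)
    (h' : IsPth G W' s' t' l') (hd : Disjoint W W') (hadj : G.Adj t s') :
    IsPth G (W ∪ W') s t' (l ++ l') := by
  obtain ⟨h1, h2, h3, h4, h5⟩ := h
  obtain ⟨g1, g2, g3, g4, g5⟩ := h'
  refine ⟨?_, ?_, ?_, ?_, ?_⟩
  · rw [List.isChain_append]
    refine ⟨h1, g1, ?_⟩
    intro x hx y hy
    rw [h4] at hx; rw [g3] at hy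
    simp at hx hy
    subst hx; subst hy; exact hadj
  · rw [List.nodup_append']
    refine ⟨h2, g2, ?_⟩
    intro x hx hx'
    exact (Finset.disjoint_left.mp hd) (h5 x hx) (g5 x hx')
  · simp [h3]
  · simp [g4]
  · intro v hv
    rcases List.mem_append.mp hv with hv | hv
    · exact Finset.mem_union_left _ (h5 v hv)
    · exact Finset.mem_union_right _ (g5 v hv)

theorem IsPth.single {W : Finset V} {s : V} (hs : s ∈ W) : IsPth G W s s [s] := by
  refine ⟨by simp, by simp, by simp, by simp, by simpa using hs⟩

/-- glue two paths sharing exactly one vertex -/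
theorem IsPth.glue {W W' : Finset V} {s t t' : V} {l l' : List V} (h : IsPth G W s t l)
    (h' : IsPth G W' t t' l') (hd : ∀ v ∈ W, v ∈ W' → v = t) :
    ∃ l'', IsPth G (W ∪ W') s t' l'' ∧ l''.length + 1 = l.length + l'.length := by
  obtain ⟨g1, g2, g3, g4, g5⟩ := h'
  cases l' with
  | nil => simp at g3
  | cons a r =>
    simp at g3; subst g3
    cases r with
    | nil =>
      simp at g4; subst g4
      exact ⟨l, h.mono Finset.subset_union_left, by simp⟩
    | cons b r =>
      have hb : IsPth G (W' \ {a}) b t' (b :: r) := by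
        refine ⟨g1.tail, (List.nodup_cons.mp g2).2, by simp, by simpa using g4, ?_⟩
        intro v hv
        rw [Finset.mem_sdiff]
        refine ⟨g5 v (List.mem_cons_of_mem _ hv), ?_⟩
        intro hva
        rw [Finset.mem_singleton] at hva
        subst hva
        exact (List.nodup_cons.mp g2).1 hv
      have hadj : G.Adj a b := (List.isChain_cons_cons.mp g1).1
      have := h.append hb ?_ hadj
      · refine ⟨_, this.mono (Finset.union_subset_union_right Finset.sdiff_subset), ?_⟩
        simp; omega
      · rw [Finset.disjoint_left]
        intro v hv hv'
        rw [Finset.mem_sdiff, Finset.mem_singleton] at hv'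
        exact hv'.2 (hd v hv hv'.1)

theorem reach {W : Finset V} {x y : V} (hx : x ∈ W) (hy : y ∈ W)
    (h2 : ∀ F ⊆ W, x ∈ F → y ∉ F → ∃ a ∈ F, ∃ b ∈ W, b ∉ F ∧ G.Adj a b) :
    ∃ l, IsPth G W x y l := by
  classical
  let R := W.filter (fun v => ∃ l, IsPth G W x v l)
  by_contra hcon
  have hyR : y ∉ R := by
    intro h
    exact hcon (Finset.mem_filter.mp h).2
  have hxR : x ∈ R := Finset.mem_filter.mpr ⟨hx, _, IsPth.single hx⟩
  obtain ⟨a, ha, b, hb, hbR, hab⟩ := h2 R (Finset.filter_subset _ _) hxR hyR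
  obtain ⟨_, l, hl⟩ := Finset.mem_filter.mp ha
  apply hbR
  refine Finset.mem_filter.mpr ⟨hb, ?_⟩
  obtain ⟨h1, h2, h3, h4, h5⟩ := hl
  by_cases hbl : b ∈ l
  · obtain ⟨l1, l2, rfl⟩ := List.append_of_mem hbl
    have e : l1 ++ b :: l2 = (l1 ++ [b]) ++ l2 := by simp
    rw [e] at h1 h2 h3 h5
    refine ⟨l1 ++ [b], h1.left_of_append, (List.nodup_append'.mp h2).1, ?_, by simp, ?_⟩
    · cases l1 <;> simpa using h3
    · intro v hv; exact h5 v (List.mem_append_left _ hv)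
  · refine ⟨l ++ [b], ?_, ?_, ?_, by simp, ?_⟩
    · rw [List.isChain_append]
      refine ⟨h1, by simp, ?_⟩
      intro u hu w hw
      rw [h4] at hu
      simp at hu hw
      subst hu; subst hw; exact hab
    · rw [List.nodup_append']
      refine ⟨h2, by simp, ?_⟩
      intro u hu hu'
      simp at hu'; subst hu'; exact hbl hu
    · simp [h3]
    · intro v hv
      rcases List.mem_append.mp hv with hv | hv
      · exact h5 v hv
      · simp at hv; subst hv; exact hb

theorem IsPth.length_ge {W : Finset V} {s t : V} {l : List V} (h : IsPth G W s t l) (hst : s ≠ t) :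
    2 ≤ l.length := by
  obtain ⟨h1, h2, h3, h4, h5⟩ := h
  match l with
  | [] => simp at h3
  | [a] => simp at h3 h4; exact absurd (h3.symm.trans h4) hst
  | a :: b :: r => simp

theorem IsPth.length_pos {W : Finset V} {s t : V} {l : List V} (h : IsPth G W s t l) :
    1 ≤ l.length := by
  obtain ⟨h1, h2, h3, h4, h5⟩ := h
  match l with
  | [] => simp at h3
  | a :: r => simp

/-- The pair conditions for a minimal lobe. -/
theorem exists_lobe (G : SimpleGraph V) (W : Finset V) (P : Finset V → V → Prop)
    (h : ∃ D v, P D v) : ∃ D v, P D v ∧ ∀ D' v', P D' v' → D.card ≤ D'.card := by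
  classical
  obtain ⟨D, v, hD⟩ := h
  have hne : {n | ∃ D v, P D v ∧ D.card = n}.Nonempty := ⟨_, D, v, hD, rfl⟩
  obtain ⟨D, v, h1, h2⟩ := Nat.sInf_mem hne
  refine ⟨D, v, h1, ?_⟩
  intro D' v' h'
  rw [h2]
  exact Nat.sInf_le ⟨D', v', h', rfl⟩

theorem EG (k : ℕ) : ∀ (W : Finset V) (x y : V), x ∈ W → y ∈ W → x ≠ y →
    (∀ F ⊆ W, F.Nonempty → x ∉ F → y ∉ F → ∀ u, ∃ a ∈ F, ∃ b ∈ W, b ∉ F ∧ b ≠ u ∧ G.Adj a b) →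
    (∀ F ⊆ W, x ∈ F → y ∉ F → ∃ a ∈ F, ∃ b ∈ W, b ∉ F ∧ G.Adj a b) →
    (∀ v ∈ W, v ≠ x → v ≠ y → ∀ T : Finset V, (∀ w ∈ W, G.Adj v w → w ∈ T) → k ≤ T.card) →
    (k ≤ 1 ∨ 3 ≤ W.card) → ∃ l, IsPth G W x y l ∧ k + 1 ≤ l.length := by
  classical
  induction k with
  | zero =>
    intro W x y hx hy hxy h1 h2 hd hk
    obtain ⟨l, hl⟩ := reach hx hy h2
    exact ⟨l, hl, by have := hl.length_ge hxy; omega⟩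
  | succ k ih =>
    intro W x y hx hy hxy h1 h2 hd hk
    by_cases hk1 : k + 1 ≤ 1
    · obtain ⟨l, hl⟩ := reach hx hy h2
      exact ⟨l, hl, by have := hl.length_ge hxy; omega⟩
    have hW3 : 3 ≤ W.card := by omega
    let W' := W.erase x
    have hyW' : y ∈ W' := Finset.mem_erase.mpr ⟨hxy.symm, hy⟩
    obtain ⟨D, v, ⟨hDW, hDne, hyD, hvW, hvD, hDv⟩, hmin⟩ := exists_lobe G W'
      (fun D v => D ⊆ W' ∧ D.Nonempty ∧ y ∉ D ∧ v ∈ W' ∧ v ∉ D ∧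
        ∀ a ∈ D, ∀ b ∈ W', b ∉ D → G.Adj a b → b = v) ⟨W'.erase y, y, by
          refine ⟨Finset.erase_subset _ _, ?_, by simp, hyW', by simp, ?_⟩
          · rw [← Finset.card_pos, Finset.card_erase_of_mem hyW', Finset.card_erase_of_mem hx]
            omega
          · intro a ha b hb hbD hab
            by_contra hne
            exact hbD (Finset.mem_erase.mpr ⟨hne, hb⟩)⟩
    have hDW0 : D ⊆ W := hDW.trans (Finset.erase_subset _ _)
    have hxD : x ∉ D := fun h => (Finset.mem_erase.mp (hDW h)).1 rfl
    have hvx : v ≠ x := (Finset.mem_erase.mp hvW).1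
    have hvW0 : v ∈ W := (Finset.mem_erase.mp hvW).2
    -- neighbour of x
    obtain ⟨z, hz, hxz⟩ : ∃ z ∈ D, G.Adj z x := by
      obtain ⟨a, ha, b, hb, hbD, hbv, hab⟩ := h1 D hDW0 hDne hxD hyD v
      by_cases hbx : b = x
      · subst hbx; exact ⟨a, ha, hab⟩
      · exact absurd (hDv a ha b (Finset.mem_erase.mpr ⟨hbx, hb⟩) hbD hab) hbv
    have hzx : z ≠ x := fun h => hxD (h ▸ hz)
    have hzy : z ≠ y := fun h => hyD (h ▸ hz)
    have hzv : z ≠ v := fun h => hvD (h ▸ hz)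
    -- nbrs of D
    have hnb : ∀ a ∈ D, ∀ b ∈ W, G.Adj a b → b ∈ insert x (insert v D) := by
      intro a ha b hb hab
      by_cases hbx : b = x
      · simp [hbx]
      by_cases hbD : b ∈ D
      · simp [hbD]
      · simp [hDv a ha b (Finset.mem_erase.mpr ⟨hbx, hb⟩) hbD hab]
    obtain ⟨l1, hl1, hlen1⟩ := ih (insert v D) z v (by simp [hz]) (by simp) hzv
      (by
        intro F hF hFne hzF hvF u
        have hFD : F ⊆ D := by
          intro a ha
          rcases Finset.mem_insert.mp (hF ha) with h | h
          · subst h; exact absurd ha hvF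
          · exact h
        by_contra hcon
        push Not at hcon
        have hlt : F.card < D.card := Finset.card_lt_card ⟨hFD, fun h => hzF (h hz)⟩
        have key : ∀ a ∈ F, ∀ b ∈ W', b ∉ F → G.Adj a b → b = u := by
          intro a ha b hb hbF hab
          by_contra hbu
          refine hcon a ha b ?_ hbF hbu hab
          have := hnb a (hFD ha) b (Finset.mem_erase.mp hb).2 hab
          rcases Finset.mem_insert.mp this with h | h
          · exact absurd h (Finset.mem_erase.mp hb).1
          · exact h
        by_cases huW : u ∈ W' ∧ u ∉ F
        · have := hmin F u ⟨hFD.trans hDW, hFne, fun h => hyD (hFD h), huW.1, huW.2, key⟩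
          omega
        · have := hmin F v ⟨hFD.trans hDW, hFne, fun h => hyD (hFD h), hvW, hvF, by
            intro a ha b hb hbF hab
            have := key a ha b hb hbF hab
            subst this
            exact absurd ⟨hb, hbF⟩ huW⟩
          omega)
      (by
        intro F hF hzF hvF
        have hFD : F ⊆ D := by
          intro a ha
          rcases Finset.mem_insert.mp (hF ha) with h | h
          · subst h; exact absurd ha hvF
          · exact h
        by_contra hcon
        push Not at hcon
        obtain ⟨a, ha, b, hb, hbF, hbx, hab⟩ := h1 F (hFD.trans hDW0) ⟨z, hzF⟩
          (fun h => hxD (hFD h)) (fun h => hyD (hFD h)) x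
        have := hnb a (hFD ha) b hb hab
        rcases Finset.mem_insert.mp this with h | h
        · exact hbx h
        · exact hcon a ha b h hbF hab)
      (by
        intro w hw hwz hwv T hT
        have hwD : w ∈ D := by
          rcases Finset.mem_insert.mp hw with h | h
          · exact absurd h hwv
          · exact h
        have := hd w (hDW0 hwD) (fun h => hxD (h ▸ hwD)) (fun h => hyD (h ▸ hwD)) (insert x T) (by
          intro b hb hab
          have := hnb w hwD b hb hab
          rcases Finset.mem_insert.mp this with h | h
          · simp [h]
          · exact Finset.mem_insert_of_mem (hT b h hab))
        have h3 := Finset.card_insert_le x T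
        omega)
      (by
        by_cases hk2 : k ≤ 1
        · exact Or.inl hk2
        · right
          have := hd z (hDW0 hz) hzx hzy (insert x ((insert v D).erase z)) (by
            intro b hb hab
            have := hnb z hz b hb hab
            rcases Finset.mem_insert.mp this with h | h
            · simp [h]
            · exact Finset.mem_insert_of_mem (Finset.mem_erase.mpr ⟨hab.ne', h⟩))
          have h3 := Finset.card_insert_le x ((insert v D).erase z)
          have hzin : z ∈ insert v D := Finset.mem_insert_of_mem hz
          rw [Finset.card_erase_of_mem hzin] at h3
          omega)
    -- path from v to y
    obtain ⟨l2, hl2⟩ : ∃ l, IsPth G (W' \ D) y v l := by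
      apply reach
      · exact Finset.mem_sdiff.mpr ⟨hyW', hyD⟩
      · exact Finset.mem_sdiff.mpr ⟨hvW, hvD⟩
      · intro F hF hyF hvF
        obtain ⟨a, ha, b, hb, hbF, hbx, hab⟩ := h1 (W' \ F) (Finset.sdiff_subset.trans (Finset.erase_subset _ _))
          ⟨v, Finset.mem_sdiff.mpr ⟨hvW, hvF⟩⟩ (by simp [W']) (by simp [hyF]) x
        have hbW' : b ∈ W' := Finset.mem_erase.mpr ⟨hbx, hb⟩
        have hbF' : b ∈ F := by
          by_contra h
          exact hbF (Finset.mem_sdiff.mpr ⟨hbW', h⟩)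
        have haD : a ∉ D := by
          intro h
          have hbD : b ∉ D := (Finset.mem_sdiff.mp (hF hbF')).2
          have := hDv a h b hbW' hbD hab
          subst this; exact hvF hbF'
        exact ⟨b, hbF', a, Finset.mem_sdiff.mpr ⟨(Finset.mem_sdiff.mp ha).1, haD⟩,
          (Finset.mem_sdiff.mp ha).2, hab.symm⟩
    obtain ⟨l3, hl3, hlen3⟩ := hl1.glue hl2.rev (by
      intro w hw hw'
      rcases Finset.mem_insert.mp hw with h | h
      · exact h
      · exact absurd h (Finset.mem_sdiff.mp hw').2)
    have hl4 := (IsPth.single (G := G) (Finset.mem_singleton_self x)).append hl3 (by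
      rw [Finset.disjoint_singleton_left]
      simp [W', hxD, hvx.symm]) hxz.symm
    refine ⟨_, hl4.mono ?_, ?_⟩
    · intro w hw
      simp only [Finset.mem_union, Finset.mem_singleton, Finset.mem_insert, Finset.mem_sdiff] at hw
      rcases hw with h | (h | h) | h
      · subst h; exact hx
      · subst h; exact hvW0
      · exact hDW0 h
      · exact (Finset.mem_erase.mp h.1).2
    · have := hl2.length_pos
      simp at hlen3 ⊢
      omega
end
end Nik

namespace Nik
variable {V : Type*} [Fintype V] [DecidableEq V] {G : SimpleGraph V}

structure Cyc (G : SimpleGraph V) (f : ℤ → V) (c : ℕ) : Prop where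
  three : 3 ≤ c
  adj : ∀ i, G.Adj (f i) (f (i+1))
  inj : ∀ i j, f i = f j ↔ (c:ℤ) ∣ i - j

def IsCl (G : SimpleGraph V) (l : List V) : Prop :=
  ∃ W s t, IsPth G W s t l ∧ G.Adj t s ∧ 3 ≤ l.length

structure Lg (G : SimpleGraph V) (f : ℤ → V) (c : ℕ) : Prop where
  cyc : Cyc G f c
  max : ∀ l, IsCl G l → l.length ≤ c

theorem Cyc.shift {f : ℤ → V} {c : ℕ} (h : Cyc G f c) (k : ℤ) : Cyc G (fun i => f (i + k)) c := by
  refine ⟨h.three, fun i => ?_, fun i j => ?_⟩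
  · have := h.adj (i + k)
    rwa [show i + k + 1 = i + 1 + k by ring] at this
  · rw [h.inj]; rw [show i + k - (j + k) = i - j by ring]

theorem Cyc.neg {f : ℤ → V} {c : ℕ} (h : Cyc G f c) : Cyc G (fun i => f (-i)) c := by
  refine ⟨h.three, fun i => ?_, fun i j => ?_⟩
  · have := h.adj (-(i + 1))
    rw [show -(i+1) + 1 = -i by ring] at this
    exact this.symm
  · rw [h.inj]; rw [show -i - -j = -(i - j) by ring, dvd_neg]

theorem Lg.shift {f : ℤ → V} {c : ℕ} (h : Lg G f c) (k : ℤ) : Lg G (fun i => f (i + k)) c :=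
  ⟨h.cyc.shift k, h.max⟩

theorem Lg.neg {f : ℤ → V} {c : ℕ} (h : Lg G f c) : Lg G (fun i => f (-i)) c :=
  ⟨h.cyc.neg, h.max⟩

theorem Cyc.per {f : ℤ → V} {c : ℕ} (h : Cyc G f c) (i : ℤ) : f (i + c) = f i := by
  rw [h.inj]; simp

def sg (f : ℤ → V) (p q : ℤ) : List V := (List.range (q - p + 1).toNat).map (fun j : ℕ => f (p + (j : ℤ)))

theorem sg_length (f : ℤ → V) {p q : ℤ} (hpq : p ≤ q) : ((sg f p q).length : ℤ) = q - p + 1 := by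
  simp [sg]; omega

theorem mem_sg (f : ℤ → V) {p q : ℤ} {v : V} : v ∈ sg f p q ↔ ∃ i, p ≤ i ∧ i ≤ q ∧ f i = v := by
  simp only [sg, List.mem_map, List.mem_range]
  constructor
  · rintro ⟨a, ha, rfl⟩; exact ⟨p + a, by omega, by omega, rfl⟩
  · rintro ⟨i, h1, h2, rfl⟩
    exact ⟨(i - p).toNat, by omega, by congr 1; omega⟩

theorem Cyc.inj' {f : ℤ → V} {c : ℕ} (h : Cyc G f c) {i j : ℤ} (hij : f i = f j) (h1 : i - j < c) (h2 : j - i < c) :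
    i = j := by
  have := (h.inj i j).1 hij
  have := Int.eq_zero_of_abs_lt_dvd this (by rw [abs_lt]; constructor <;> omega)
  omega

theorem sg_pth {f : ℤ → V} {c : ℕ} (h : Cyc G f c) {p q : ℤ} (hpq : p ≤ q) (hq : q < p + c) :
    IsPth G (sg f p q).toFinset (f p) (f q) (sg f p q) := by
  refine ⟨?_, ?_, ?_, ?_, by simp⟩
  · rw [sg, List.isChain_map]
    rw [List.isChain_iff_getElem]
    intro i hi
    simp only [List.getElem_range]
    have := h.adj (p + i)
    push_cast
    rwa [← add_assoc]
  · rw [sg]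
    refine List.Nodup.map_on ?_ List.nodup_range
    intro x hx y hy hxy
    simp only [List.mem_range] at hx hy
    have := h.inj' hxy (by omega) (by omega)
    omega
  · obtain ⟨k, hk⟩ : ∃ k, (q - p + 1).toNat = k + 1 := ⟨(q-p).toNat, by omega⟩
    rw [sg, hk]; simp [List.range_succ_eq_map]
  · obtain ⟨k, hk⟩ : ∃ k, (q - p + 1).toNat = k + 1 := ⟨(q-p).toNat, by omega⟩
    rw [sg, hk]; simp [List.range_succ]
    congr 1; omega

/-- Gap lemma. -/
theorem Lg.gap {f : ℤ → V} {c : ℕ} (h : Lg G f c) {W : Finset V} {s t : V} {Q : List V}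
    (hQ : IsPth G W s t Q) (hW : ∀ v ∈ W, ∀ i, f i ≠ v) {p k : ℤ} (hk : 0 < k) (hkc : k < c)
    (hs : G.Adj (f p) s) (ht : G.Adj (f (p + k)) t) : (Q.length : ℤ) + 1 ≤ k := by
  have h1 := sg_pth h.cyc (p := p + k) (q := p + c) (by omega) (by omega)
  rw [h.cyc.per] at h1
  have h2 := h1.append hQ (by
    rw [Finset.disjoint_left]; intro v hv hv'
    simp only [List.mem_toFinset, mem_sg] at hv
    obtain ⟨i, _, _, hi⟩ := hv
    exact hW v hv' i hi) hs
  have h3 := sg_length f (p := p + k) (q := p + c) (by omega)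
  have h4 := hQ.length_pos
  have := h.max _ ⟨_, _, _, h2, ht.symm, by rw [List.length_append]; omega⟩
  rw [List.length_append] at this
  omega

theorem sg_disj {f : ℤ → V} {c : ℕ} (h : Cyc G f c) {p q p' q' : ℤ} (h1 : q < p') (h2 : q' < p + c) :
    Disjoint (sg f p q).toFinset (sg f p' q').toFinset := by
  rw [Finset.disjoint_left]; intro v hv hv'
  simp only [List.mem_toFinset, mem_sg] at hv hv'
  obtain ⟨i, _, _, rfl⟩ := hv
  obtain ⟨j, _, _, hj⟩ := hv'
  have := h.inj' hj (by omega) (by omega)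
  omega

theorem sg_off {f : ℤ → V} {W : Finset V} (hW : ∀ v ∈ W, ∀ i, f i ≠ v) {p q : ℤ} :
    Disjoint (sg f p q).toFinset W := by
  rw [Finset.disjoint_left]; intro v hv hv'
  simp only [List.mem_toFinset, mem_sg] at hv
  obtain ⟨i, _, _, hi⟩ := hv
  exact hW v hv' i hi

theorem Lg.cross_aux {f : ℤ → V} {c : ℕ} (h : Lg G f c) {W : Finset V} {s t : V} {Q : List V}
    (hQ : IsPth G W s t Q) (hW : ∀ v ∈ W, ∀ i, f i ≠ v) {p0 p1 p2 p3 : ℤ} (h01 : p0 < p1) (h12 : p1 ≤ p2)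
    (h23 : p2 < p3) (h30 : p3 < p0 + c)
    (hs : G.Adj (f p0) s) (ht : G.Adj (f p2) t) :
    ∃ l, IsPth G (((sg f p3 (p0 + c)).toFinset ∪ W) ∪ (sg f p1 p2).toFinset) (f p3) (f p1) l ∧
      (l.length : ℤ) = (p0 + c - p3 + 1) + Q.length + (p2 - p1 + 1) ∧ 3 ≤ l.length := by
  have h1 := sg_pth h.cyc (p := p3) (q := p0 + c) (by omega) (by omega)
  rw [h.cyc.per] at h1
  have h2 := h1.append hQ (sg_off hW) hs
  have h3 := sg_pth h.cyc (p := p1) (q := p2) (by omega) (by omega)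
  have h4 := h2.append h3.rev (by
    rw [Finset.disjoint_union_left]
    exact ⟨(sg_disj h.cyc (by omega) (by omega)).symm, (sg_off hW).symm⟩) ht.symm
  refine ⟨_, h4, ?_⟩
  have l1 := sg_length f (p := p3) (q := p0 + c) (by omega)
  have l2 := sg_length f (p := p1) (q := p2) (by omega)
  have := hQ.length_pos
  simp only [List.length_append, List.length_reverse]
  omega

theorem Lg.cross {f : ℤ → V} {c : ℕ} (h : Lg G f c) {W W' : Finset V} {s t s' t' : V} {Q R : List V}
    (hQ : IsPth G W s t Q) (hW : ∀ v ∈ W, ∀ i, f i ≠ v)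
    (hR : IsPth G W' s' t' R) (hW' : ∀ v ∈ W', ∀ i, f i ≠ v) (hWW : Disjoint W W')
    {p0 p1 p2 p3 : ℤ} (h01 : p0 < p1) (h12 : p1 ≤ p2)
    (h23 : p2 < p3) (h30 : p3 < p0 + c)
    (hs : G.Adj (f p0) s) (ht : G.Adj (f p2) t) (hs' : G.Adj (f p1) s') (ht' : G.Adj (f p3) t') :
    (Q.length : ℤ) + R.length + 2 + (p2 - p1) ≤ p3 - p0 := by
  obtain ⟨l, h1, h2, h3⟩ := h.cross_aux hQ hW h01 h12 h23 h30 hs ht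
  have h4 := h1.append hR (by
    rw [Finset.disjoint_union_left, Finset.disjoint_union_left]
    exact ⟨⟨sg_off hW', hWW⟩, sg_off hW'⟩) hs'
  have := h.max _ ⟨_, _, _, h4, ht'.symm, by rw [List.length_append]; omega⟩
  rw [List.length_append] at this
  omega

theorem Lg.cross0 {f : ℤ → V} {c : ℕ} (h : Lg G f c) {W : Finset V} {s t : V} {Q : List V}
    (hQ : IsPth G W s t Q) (hW : ∀ v ∈ W, ∀ i, f i ≠ v)
    {p0 p1 p2 p3 : ℤ} (h01 : p0 < p1) (h12 : p1 ≤ p2)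
    (h23 : p2 < p3) (h30 : p3 < p0 + c)
    (hs : G.Adj (f p0) s) (ht : G.Adj (f p2) t) (hs' : G.Adj (f p1) (f p3)) :
    (Q.length : ℤ) + 2 + (p2 - p1) ≤ p3 - p0 := by
  obtain ⟨l, h1, h2, h3⟩ := h.cross_aux hQ hW h01 h12 h23 h30 hs ht
  have := h.max _ ⟨_, _, _, h1, hs', h3⟩
  omega

/-- vertex set of the cycle -/
def Cs (f : ℤ → V) (c : ℕ) : Finset V := (Finset.range c).image (fun i : ℕ => f i)

theorem Cyc.mem_Cs {f : ℤ → V} {c : ℕ} (h : Cyc G f c) {v : V} : v ∈ Cs f c ↔ ∃ i, f i = v := by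
  simp only [Cs, Finset.mem_image, Finset.mem_range]
  constructor
  · rintro ⟨a, _, h⟩; exact ⟨a, h⟩
  · rintro ⟨i, rfl⟩
    have hc : (0:ℤ) < c := by have := h.three; omega
    have h1 := Int.emod_nonneg i hc.ne'
    have h2 := Int.emod_lt_of_pos i hc
    refine ⟨(i % c).toNat, by omega, ?_⟩
    rw [h.inj, Int.toNat_of_nonneg h1]
    have := Int.emod_add_mul_ediv i c
    exact ⟨-(i / c), by linarith⟩

theorem Cyc.card_Cs {f : ℤ → V} {c : ℕ} (h : Cyc G f c) : (Cs f c).card = c := by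
  rw [Cs, Finset.card_image_of_injOn, Finset.card_range]
  intro a ha b hb hab
  simp only [Finset.coe_range, Set.mem_Iio] at ha hb
  have := h.inj' hab (by omega) (by omega)
  omega

open Classical in
noncomputable def sh (f : ℤ → V) (k : ℤ) (v : V) : V :=
  if h : ∃ i, f i = v then f (h.choose + k) else v

theorem Cyc.sh_eq {f : ℤ → V} {c : ℕ} (h : Cyc G f c) (k i : ℤ) : sh f k (f i) = f (i + k) := by
  have hh : ∃ j, f j = f i := ⟨i, rfl⟩
  rw [sh, dif_pos hh, h.inj]
  have := (h.inj _ _).1 hh.choose_spec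
  rwa [show hh.choose + k - (i + k) = hh.choose - i by ring]

theorem Cyc.sh_injOn {f : ℤ → V} {c : ℕ} (h : Cyc G f c) (k : ℤ) : Set.InjOn (sh f k) {v | ∃ i, f i = v} := by
  rintro _ ⟨i, rfl⟩ _ ⟨j, rfl⟩ hij
  rw [h.sh_eq, h.sh_eq, h.inj] at hij
  rw [h.inj]
  rwa [show i + k - (j + k) = i - j by ring] at hij

theorem Cyc.gaps {f : ℤ → V} {c : ℕ} (h : Cyc G f c) (U : Finset V) (hU : ∀ u ∈ U, ∃ i, f i = u)
    (h2 : 2 ≤ U.card) : ∃ (nx : V → V) (g : V → ℕ),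
      (∀ u ∈ U, nx u ∈ U ∧ 1 ≤ g u ∧ g u < c ∧ nx u ≠ u ∧ ∃ p : ℤ, f p = u ∧ f (p + g u) = nx u ∧
        ∀ k : ℤ, 0 < k → k < g u → f (p + k) ∉ U) ∧
      (∑ u ∈ U, g u ≤ c) ∧
      (∀ Z ⊆ U, Z.Nonempty → (U \ Z).Nonempty → ∃ u ∈ U \ Z, nx u ∈ Z) := by
  classical
  choose! pos hpos using hU
  have hc := h.three
  have ex : ∀ u ∈ U, ∃ k : ℕ, 1 ≤ k ∧ k < c ∧ f (pos u + k) ∈ U := by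
    intro u hu
    obtain ⟨w, hw, hwu⟩ := Finset.exists_mem_ne (by omega : 1 < U.card) u
    have hc0 : (0:ℤ) < c := by omega
    have h1 := Int.emod_nonneg (pos w - pos u) hc0.ne'
    have h2 := Int.emod_lt_of_pos (pos w - pos u) hc0
    have h3 := Int.emod_add_mul_ediv (pos w - pos u) c
    have hk : f (pos u + ((pos w - pos u) % c)) = w := by
      rw [← hpos w hw, h.inj]
      refine ⟨-((pos w - pos u) / c), ?_⟩
      rw [hpos w hw]
      linarith
    refine ⟨((pos w - pos u) % c).toNat, ?_, by omega, by rw [Int.toNat_of_nonneg h1, hk]; exact hw⟩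
    by_contra hcon
    have h0 : (pos w - pos u) % c = 0 := by omega
    rw [h0, add_zero, hpos u hu] at hk
    exact hwu hk.symm
  have ex2 : ∀ u ∈ U, ∃ k : ℕ, (1 ≤ k ∧ k < c ∧ f (pos u + k) ∈ U) ∧ ∀ j < k, ¬ (1 ≤ j ∧ j < c ∧ f (pos u + j) ∈ U) :=
    fun u hu => ⟨Nat.find (ex u hu), Nat.find_spec (ex u hu), fun j hj => Nat.find_min (ex u hu) hj⟩
  choose! g hg hg' using ex2
  have hmin : ∀ u ∈ U, ∀ k : ℤ, 0 < k → k < g u → f (pos u + k) ∉ U := by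
    intro u hu k h0 hk hmem
    have := (hg u hu).2.1
    have e : ((k.toNat : ℕ) : ℤ) = k := by omega
    exact hg' u hu k.toNat (by omega) ⟨by omega, by omega, by rwa [e]⟩
  refine ⟨fun u => f (pos u + g u), g, ?_, ?_, ?_⟩
  · intro u hu
    obtain ⟨a, b, d⟩ := hg u hu
    refine ⟨d, a, b, ?_, pos u, hpos u hu, rfl, hmin u hu⟩
    intro he
    have he' : f (pos u + g u) = f (pos u) := by rw [hpos u hu]; exact he
    have := h.inj' he' (by omega) (by omega)
    omega
  · have hcard : (U.sigma (fun u => Finset.range (g u))).card = ∑ u ∈ U, g u := by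
      rw [Finset.card_sigma]; simp
    rw [← hcard, ← h.card_Cs]
    refine Finset.card_le_card_of_injOn (fun x => f (pos x.1 + x.2)) ?_ ?_
    · intro x _; simp only [Finset.mem_coe]; rw [h.mem_Cs]; exact ⟨_, rfl⟩
    · have key : ∀ u ∈ U, ∀ u' ∈ U, ∀ k k' : ℕ, k ≤ k' → k' < g u' → f (pos u + k) = f (pos u' + k') → u = u' ∧ k = k' := by
        intro u hu u' hu' k k' hkk hk' he
        have he2 : f (pos u' + (k' - k)) = f (pos u) := by
          rw [h.inj] at he ⊢
          obtain ⟨m, hm⟩ := he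
          exact ⟨-m, by linarith⟩
        rcases hkk.eq_or_lt with rfl | hlt
        · simp only [sub_self, add_zero] at he2
          rw [hpos u hu, hpos u' hu'] at he2
          exact ⟨he2.symm, rfl⟩
        · exfalso
          refine hmin u' hu' (k' - k) (by omega) (by omega) ?_
          rw [he2, hpos u hu]; exact hu
      rintro ⟨u, k⟩ hx ⟨u', k'⟩ hx' he
      simp only [Finset.coe_sigma, Set.mem_sigma_iff, Finset.mem_coe, Finset.mem_range] at hx hx'
      simp only at he
      rcases le_total k k' with hk | hk
      · obtain ⟨rfl, rfl⟩ := key u hx.1 u' hx'.1 k k' hk hx'.2 he; rfl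
      · obtain ⟨rfl, rfl⟩ := key u' hx'.1 u hx.1 k' k hk hx.2 he.symm; rfl
  · intro Z hZ hZn hUZ
    have hex : ∃ k : ℕ, ∃ u ∈ U \ Z, f (pos u + k) ∈ Z := by
      obtain ⟨z, hz⟩ := hZn
      obtain ⟨u, hu⟩ := hUZ
      have huU : u ∈ U := (Finset.mem_sdiff.1 hu).1
      have hc0 : (0:ℤ) < c := by omega
      have h1 := Int.emod_nonneg (pos z - pos u) hc0.ne'
      have h3 := Int.emod_add_mul_ediv (pos z - pos u) c
      have hk : f (pos u + ((pos z - pos u) % c)) = f (pos z) := by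
        rw [h.inj]
        exact ⟨-((pos z - pos u) / c), by linarith⟩
      refine ⟨((pos z - pos u) % c).toNat, u, hu, ?_⟩
      rw [Int.toNat_of_nonneg h1, hk, hpos z (hZ hz)]; exact hz
    obtain ⟨u, hu, hk⟩ := Nat.find_spec hex
    set k := Nat.find hex with hkdef
    have huU : u ∈ U := (Finset.mem_sdiff.1 hu).1
    have huZ : u ∉ Z := (Finset.mem_sdiff.1 hu).2
    have hk0 : 0 < k := by
      rcases Nat.eq_zero_or_pos k with h0 | h0
      · rw [h0] at hk; simp only [Nat.cast_zero, add_zero] at hk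
        rw [hpos u huU] at hk; exact absurd hk huZ
      · exact h0
    have hgk : g u ≤ k := by
      by_contra hlt
      exact hmin u huU k (by omega) (by omega) (hZ hk)
    refine ⟨u, hu, ?_⟩
    rcases hgk.eq_or_lt with he | hlt
    · simp only [he]; exact hk
    · by_contra hnz
      have hnU := (hg u huU).2.2
      have hlt2 : k - g u < k := by have := (hg u huU).1; omega
      refine Nat.find_min hex hlt2 ⟨f (pos u + g u), Finset.mem_sdiff.2 ⟨hnU, hnz⟩, ?_⟩
      have e2 : f (pos (f (pos u + g u)) + ((k - g u : ℕ) : ℤ)) = f (pos u + k) := by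
        rw [h.inj]
        have := (h.inj _ _).1 (hpos _ hnU)
        convert this using 1
        push_cast [hgk]; ring
      rw [e2]; exact hk

end Nik

namespace Nik
variable {V : Type*} [Fintype V] [DecidableEq V] {G : SimpleGraph V}

/-- no small vertex cut, in edge form -/
def KC (G : SimpleGraph V) (k : ℕ) : Prop :=
  ∀ S F : Finset V, S.card < k → F.Nonempty → Disjoint F S → (∃ v, v ∉ F ∧ v ∉ S) →
    ∃ a ∈ F, ∃ b, b ∉ F ∧ b ∉ S ∧ G.Adj a b

structure Ctx (G : SimpleGraph V) (f : ℤ → V) (c δ : ℕ) : Prop where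
  lg : Lg G f c
  kc : KC G 4
  al : ∀ s : Finset V, (∀ u ∈ s, ∀ v ∈ s, ¬ G.Adj u v) → s.card ≤ δ
  dg : ∀ v, ∀ T : Finset V, (∀ w, G.Adj v w → w ∈ T) → δ ≤ T.card

structure Cmp (G : SimpleGraph V) (f : ℤ → V) (H : Finset V) : Prop where
  ne : H.Nonempty
  off : ∀ v ∈ H, ∀ i, f i ≠ v
  cl : ∀ v ∈ H, ∀ w, G.Adj v w → w ∈ H ∨ ∃ i, f i = w
  conn : ∀ F ⊆ H, F.Nonempty → F ≠ H → ∃ a ∈ F, ∃ b ∈ H, b ∉ F ∧ G.Adj a b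

open Classical in
/-- neighbours of `D` on the cycle -/
noncomputable def NC (G : SimpleGraph V) (f : ℤ → V) (D : Finset V) : Finset V :=
  Finset.univ.filter (fun u => (∃ i, f i = u) ∧ ∃ v ∈ D, G.Adj u v)

theorem mem_NC {f : ℤ → V} {D : Finset V} {u : V} :
    u ∈ NC G f D ↔ (∃ i, f i = u) ∧ ∃ v ∈ D, G.Adj u v := by simp [NC]

theorem NC_mono {f : ℤ → V} {D D' : Finset V} (h : D ⊆ D') : NC G f D ⊆ NC G f D' := by
  intro u hu
  rw [mem_NC] at hu ⊢
  obtain ⟨h1, v, hv, h2⟩ := hu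
  exact ⟨h1, v, h hv, h2⟩

theorem exists_cmp {f : ℤ → V} (K : Finset V) (hne : K.Nonempty) (hoff : ∀ v ∈ K, ∀ i, f i ≠ v)
    (hcl : ∀ v ∈ K, ∀ w, G.Adj v w → w ∈ K ∨ ∃ i, f i = w) : ∃ H ⊆ K, Cmp G f H := by
  classical
  let P : Finset V → Prop := fun H => H ⊆ K ∧ H.Nonempty ∧ ∀ v ∈ H, ∀ w, G.Adj v w → w ∈ H ∨ ∃ i, f i = w
  have hP : ∃ n, ∃ H, P H ∧ H.card = n := ⟨_, K, ⟨Finset.Subset.refl _, hne, hcl⟩, rfl⟩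
  obtain ⟨H, ⟨h1, h2, h3⟩, h4⟩ := Nat.find_spec hP
  refine ⟨H, h1, h2, fun v hv => hoff v (h1 hv), h3, ?_⟩
  intro F hF hFn hFH
  by_contra hcon
  push Not at hcon
  have hlt : F.card < Nat.find hP := by rw [← h4]; exact Finset.card_lt_card (hF.ssubset_of_ne hFH)
  refine Nat.find_min hP hlt ⟨F, ⟨hF.trans h1, hFn, ?_⟩, rfl⟩
  intro v hv w hvw
  rcases h3 v (hF hv) w hvw with h | h
  · left; by_contra hw
    exact hcon v hv w h hw hvw
  · right; exact h

theorem Cyc.shift_eq {f : ℤ → V} {c : ℕ} (h : Cyc G f c) (k : ℤ) {p q : ℤ} (he : f p = f q) :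
    f (p + k) = f (q + k) := by
  rw [h.inj] at he ⊢
  rwa [show p + k - (q + k) = p - q by ring]

theorem Cyc.dist {f : ℤ → V} {c : ℕ} (h : Cyc G f c) (p q : ℤ) (hne : f p ≠ f q) :
    ∃ k : ℤ, 0 < k ∧ k < c ∧ f (p + k) = f q := by
  have hc := h.three
  have hc0 : (0:ℤ) < c := by omega
  have h1 := Int.emod_nonneg (q - p) hc0.ne'
  have h2 := Int.emod_lt_of_pos (q - p) hc0
  have h3 := Int.emod_add_mul_ediv (q - p) c
  have hk : f (p + ((q - p) % c)) = f q := by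
    rw [h.inj]; exact ⟨-((q - p) / c), by linarith⟩
  refine ⟨_, ?_, h2, hk⟩
  rcases h1.eq_or_lt with h0 | h0
  · rw [← h0, add_zero] at hk; exact absurd hk hne
  · exact h0

section
variable {f : ℤ → V} {c δ : ℕ} {H : Finset V}

theorem Cmp.path (hH : Cmp G f H) {x y : V} (hx : x ∈ H) (hy : y ∈ H) : ∃ l, IsPth G H x y l := by
  refine reach hx hy ?_
  intro F hF hxF hyF
  exact hH.conn F hF ⟨x, hxF⟩ (fun h => hyF (h ▸ hy))

theorem Cmp.gap2 (hL : Lg G f c) (hH : Cmp G f H) {p k : ℤ} (h0 : 0 < k) (hk : k < c)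
    (h1 : f p ∈ NC G f H) (h2 : f (p + k) ∈ NC G f H) : 2 ≤ k := by
  obtain ⟨_, x, hx, hpx⟩ := mem_NC.1 h1
  obtain ⟨_, y, hy, hqy⟩ := mem_NC.1 h2
  obtain ⟨l, hl⟩ := hH.path hx hy
  have := hL.gap hl hH.off h0 hk hpx hqy
  have := hl.length_pos
  omega

theorem Cmp.succ_notin (hL : Lg G f c) (hH : Cmp G f H) {p : ℤ} (h1 : f p ∈ NC G f H) : f (p+1) ∉ NC G f H := by
  intro h2
  have := hL.cyc.three
  have := Cmp.gap2 hL hH (k := 1) (by omega) (by omega) h1 h2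
  omega

theorem Cmp.exists_off (hL : Lg G f c) (hH : Cmp G f H) : ∃ i, f i ∉ NC G f H := by
  by_cases h : f 0 ∈ NC G f H
  · exact ⟨_, hH.succ_notin hL h⟩
  · exact ⟨0, h⟩

theorem NC_in {D : Finset V} {u : V} (h : u ∈ NC G f D) : ∃ i, f i = u := (mem_NC.1 h).1

/-- cut lemma: `T` a set such that every edge leaving `F ⊆ H` ends in `T`. -/
theorem Cmp.cut (hX : Ctx G f c δ) (hH : Cmp G f H) (F : Finset V) (hF : F ⊆ H) (hFn : F.Nonempty) (T : Finset V)
    (hFT : Disjoint F T) (hT : ∀ a ∈ F, ∀ b, b ∉ F → G.Adj a b → b ∈ T) (hv : ∃ v, v ∉ F ∧ v ∉ T) : 4 ≤ T.card := by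
  by_contra hlt
  obtain ⟨a, ha, b, hb, hbT, hab⟩ := hX.kc T F (by omega) hFn hFT hv
  exact hbT (hT a ha b hb hab)

theorem Cmp.four (hX : Ctx G f c δ) (hH : Cmp G f H) : 4 ≤ (NC G f H).card := by
  refine hH.cut hX H (Finset.Subset.refl _) hH.ne _ ?_ ?_ ?_
  · rw [Finset.disjoint_left]; intro v hv hv'
    obtain ⟨i, hi⟩ := NC_in hv'
    exact hH.off v hv i hi
  · intro a ha b hb hab
    rcases hH.cl a ha b hab with h | h
    · exact absurd h hb
    · exact mem_NC.2 ⟨h, a, ha, hab.symm⟩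
  · obtain ⟨i, hi⟩ := hH.exists_off hX.lg
    exact ⟨f i, fun h => hH.off _ h i rfl, hi⟩

theorem Cmp.succ_indep (hL : Lg G f c) (hH : Cmp G f H) {p q : ℤ} (h1 : f p ∈ NC G f H) (h2 : f q ∈ NC G f H) :
    ¬ G.Adj (f (p+1)) (f (q+1)) := by
  intro hadj
  by_cases hpq : f p = f q
  · have : f (p+1) = f (q+1) := by
      rw [← hL.cyc.sh_eq, ← hL.cyc.sh_eq, hpq]
    rw [this] at hadj; exact G.irrefl hadj
  · obtain ⟨k, h0, hk, he⟩ := hL.cyc.dist p q hpq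
    have he' : f (p + k + 1) = f (q + 1) := by
      exact hL.cyc.shift_eq 1 he
    rw [← he] at h2; rw [← he'] at hadj
    have hk1 : k + 1 ≠ c := by
      intro hh
      apply hH.succ_notin hL h2
      rw [add_assoc, hh, hL.cyc.per]; exact h1
    obtain ⟨_, x, hx, hpx⟩ := mem_NC.1 h1
    obtain ⟨_, y, hy, hqy⟩ := mem_NC.1 h2
    obtain ⟨l, hl⟩ := hH.path hx hy
    have := hL.cross0 hl hH.off (p0 := p) (p1 := p + 1) (p2 := p + k) (p3 := p + k + 1) (by omega) (by omega) (by omega)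
      (by omega) hpx hqy hadj
    have := hl.length_pos
    omega

theorem Cmp.indep (hX : Ctx G f c δ) (hH : Cmp G f H) (I : Finset V) (hI : I ⊆ H)
    (hind : ∀ u ∈ I, ∀ v ∈ I, ¬ G.Adj u v) : (NC G f H).card + I.card ≤ δ := by
  have hcyc := hX.lg.cyc
  have hcard : ((NC G f H).image (sh f 1)).card = (NC G f H).card := by
    apply Finset.card_image_of_injOn
    exact (hcyc.sh_injOn 1).mono (fun v hv => NC_in hv)
  have hform : ∀ v ∈ (NC G f H).image (sh f 1), ∃ p, f p ∈ NC G f H ∧ v = f (p + 1) := by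
    intro v hv
    obtain ⟨u, hu, rfl⟩ := Finset.mem_image.1 hv
    obtain ⟨i, rfl⟩ := NC_in hu
    exact ⟨i, hu, hcyc.sh_eq 1 i⟩
  have hdisj : Disjoint ((NC G f H).image (sh f 1)) I := by
    rw [Finset.disjoint_left]; intro v hv hv'
    obtain ⟨p, _, rfl⟩ := hform v hv
    exact hH.off _ (hI hv') _ rfl
  rw [← hcard, ← Finset.card_union_of_disjoint hdisj]
  apply hX.al
  have key : ∀ u ∈ (NC G f H).image (sh f 1), ∀ v ∈ I, ¬ G.Adj u v := by
    intro u hu v hv hadj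
    obtain ⟨p, hp, rfl⟩ := hform u hu
    exact hH.succ_notin hX.lg hp (mem_NC.2 ⟨⟨_, rfl⟩, v, hI hv, hadj⟩)
  intro u hu v hv
  rw [Finset.mem_union] at hu hv
  rcases hu with hu | hu <;> rcases hv with hv | hv
  · obtain ⟨p, hp, rfl⟩ := hform u hu
    obtain ⟨q, hq, rfl⟩ := hform v hv
    exact hH.succ_indep hX.lg hp hq
  · exact key u hu v hv
  · exact fun h => key v hv u hu h.symm
  · exact hind u hu v hv

/-- degree count inside `H` -/
theorem Cmp.deg (hX : Ctx G f c δ) (hH : Cmp G f H) {v : V} (hv : v ∈ H) (T : Finset V)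
    (hT : ∀ w ∈ H, G.Adj v w → w ∈ T) : δ ≤ T.card + (NC G f {v}).card := by
  refine (hX.dg v (T ∪ NC G f {v}) ?_).trans (Finset.card_union_le _ _)
  intro w hw
  rw [Finset.mem_union]
  rcases hH.cl v hv w hw with h | h
  · exact Or.inl (hT w h hw)
  · exact Or.inr (mem_NC.2 ⟨h, v, by simp, hw.symm⟩)
end
end Nik

namespace Nik
variable {V : Type*} [Fintype V] [DecidableEq V] {G : SimpleGraph V}

def TwoC (G : SimpleGraph V) (H : Finset V) : Prop :=
  ∀ F ⊆ H, F.Nonempty → ∀ u, u ∉ F → (∃ w ∈ H, w ∉ F ∧ w ≠ u) → ∃ a ∈ F, ∃ b ∈ H, b ∉ F ∧ b ≠ u ∧ G.Adj a b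

open Classical in
/-- vertices of `NC G f H` whose only neighbour in `H` is `x` -/
noncomputable def PV (G : SimpleGraph V) (f : ℤ → V) (H : Finset V) (x : V) : Finset V :=
  (NC G f H).filter (fun u => ∀ v ∈ H, G.Adj u v → v = x)

section
variable {f : ℤ → V} {c δ : ℕ} {H : Finset V}

theorem mem_PV {x u : V} : u ∈ PV G f H x ↔ u ∈ NC G f H ∧ ∀ v ∈ H, G.Adj u v → v = x := by simp [PV]

theorem PV_adj {x u : V} (h : u ∈ PV G f H x) : x ∈ H ∧ G.Adj u x := by
  obtain ⟨h1, h2⟩ := mem_PV.1 h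
  obtain ⟨_, v, hv, hv'⟩ := mem_NC.1 h1
  have := h2 v hv hv'
  subst this; exact ⟨hv, hv'⟩

theorem PV_eq {x y u : V} (h : u ∈ PV G f H x) (h' : u ∈ PV G f H y) : x = y :=
  (mem_PV.1 h').2 x (PV_adj h).1 (PV_adj h).2

theorem PV_deg (hX : Ctx G f c δ) (hH : Cmp G f H) {v : V} (hv : v ∈ H) (T : Finset V)
    (hT : ∀ w ∈ H, G.Adj v w → w ∈ T) :
    δ + ∑ x ∈ H, (PV G f H x).card ≤ T.card + (NC G f H).card + (PV G f H v).card := by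
  have h1 := hH.deg hX hv T hT
  have h2 : ((H.erase v).biUnion (PV G f H)).card = ∑ x ∈ H.erase v, (PV G f H x).card := by
    apply Finset.card_biUnion
    intro x _ y _ hxy
    refine Finset.disjoint_left.2 ?_
    intro u hu hu'
    exact hxy (PV_eq hu hu')
  have h3 := Finset.add_sum_erase H (fun x => (PV G f H x).card) hv
  have h4 : Disjoint (NC G f {v}) ((H.erase v).biUnion (PV G f H)) := by
    rw [Finset.disjoint_left]; intro u hu hu'
    rw [Finset.mem_biUnion] at hu'
    obtain ⟨x, hx, hux⟩ := hu'
    obtain ⟨_, w, hw, huw⟩ := mem_NC.1 hu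
    rw [Finset.mem_singleton] at hw; subst hw
    exact (Finset.mem_erase.1 hx).1 ((mem_PV.1 hux).2 w hv huw).symm
  have h5 : NC G f {v} ∪ ((H.erase v).biUnion (PV G f H)) ⊆ NC G f H := by
    apply Finset.union_subset
    · exact NC_mono (by simpa using hv)
    · rw [Finset.biUnion_subset]; intro x _ u hu; exact (mem_PV.1 hu).1
  have h6 := Finset.card_le_card h5
  rw [Finset.card_union_of_disjoint h4] at h6
  omega

theorem PV_not_all (hX : Ctx G f c δ) (hH : Cmp G f H) (h2 : 2 ≤ H.card) (x : V) : (NC G f H \ PV G f H x).Nonempty := by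
  by_contra hcon
  rw [Finset.not_nonempty_iff_eq_empty, Finset.sdiff_eq_empty_iff_subset] at hcon
  obtain ⟨y, hy, hyx⟩ := Finset.exists_mem_ne (by omega : 1 < H.card) x
  have := hH.cut hX (H.erase x) (Finset.erase_subset _ _) ⟨y, by simp [hy, hyx]⟩ {x} (by simp) ?_ ?_
  · simp at this
  · intro a ha b hb hab
    rw [Finset.mem_erase] at ha hb
    rcases hH.cl a ha.2 b hab with h | h
    · rw [Finset.mem_singleton]; by_contra hbx; exact hb ⟨hbx, h⟩
    · have := hcon (mem_NC.2 ⟨h, a, ha.2, hab.symm⟩)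
      exact absurd ((mem_PV.1 this).2 a ha.2 hab.symm) ha.1
  · refine ⟨f 0, fun h => hH.off _ (Finset.mem_of_mem_erase h) 0 rfl, ?_⟩
    rw [Finset.mem_singleton]
    intro h0
    obtain ⟨u, hu⟩ : (NC G f H).Nonempty := Finset.card_pos.1 (by have := hH.four hX; omega)
    exact hH.off x (PV_adj (hcon hu)).1 0 h0

theorem TwoC.long (hH : Cmp G f H) (h2c : TwoC G H) (h3 : 3 ≤ H.card) {x y : V} (hx : x ∈ H) (hy : y ∈ H) (hxy : x ≠ y)
    (k : ℕ) (hk : ∀ v ∈ H, v ≠ x → v ≠ y → ∀ T : Finset V, (∀ w ∈ H, G.Adj v w → w ∈ T) → k ≤ T.card) :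
    ∃ l, IsPth G H x y l ∧ k + 1 ≤ l.length := by
  refine EG k H x y hx hy hxy ?_ ?_ hk (Or.inr h3)
  · intro F hF hFn hxF hyF u
    by_cases hu : u ∈ F
    · obtain ⟨a, ha, b, hb, hbF, hab⟩ := hH.conn F hF hFn (fun h => hxF (h ▸ hx))
      exact ⟨a, ha, b, hb, hbF, fun h => hbF (h ▸ hu), hab⟩
    · refine h2c F hF hFn u hu ?_
      by_cases hxu : x = u
      · exact ⟨y, hy, hyF, fun h => hxy (hxu.trans h.symm)⟩
      · exact ⟨x, hx, hxF, hxu⟩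
  · intro F hF hxF hyF
    exact hH.conn F hF ⟨x, hxF⟩ (fun h => hyF (h ▸ hy))

theorem case1 (hX : Ctx G f c δ) (hH : Cmp G f H) (h2c : TwoC G H) (h3 : 3 ≤ H.card) : 4 * δ ≤ c + 8 := by
  classical
  set N := NC G f H with hN
  set P := PV G f H with hP
  set B := ∑ x ∈ H, (P x).card with hB
  have hfour : 4 ≤ N.card := hH.four hX
  obtain ⟨nx, g, hg, hsum, htr⟩ := hX.lg.cyc.gaps N (fun u hu => NC_in hu) (by omega)
  -- good vertices
  let good : V → Prop := fun u => ∃ x ∈ H, ∃ y ∈ H, x ≠ y ∧ G.Adj u x ∧ G.Adj (nx u) y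
  let Gd := N.filter good
  let Bd := N.filter (fun u => ¬ good u)
  have hm : Gd.card + Bd.card = N.card := Finset.card_filter_add_card_filter_not (s := N) good
  have hbad : ∀ u ∈ Bd, ∃ x ∈ H, u ∈ P x ∧ nx u ∈ P x := by
    intro u hu
    obtain ⟨huN, hug⟩ := Finset.mem_filter.1 hu
    obtain ⟨_, x, hx, hux⟩ := mem_NC.1 huN
    have hnu := (hg u huN).1
    obtain ⟨_, y, hy, huy⟩ := mem_NC.1 hnu
    have hall : ∀ x ∈ H, ∀ y ∈ H, G.Adj u x → G.Adj (nx u) y → x = y := by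
      intro x hx y hy h1 h2
      by_contra hne
      exact hug ⟨x, hx, y, hy, hne, h1, h2⟩
    have hxy := hall x hx y hy hux huy
    refine ⟨x, hx, mem_PV.2 ⟨huN, fun v hv h => ?_⟩, mem_PV.2 ⟨hnu, fun v hv h => ?_⟩⟩
    · rw [hxy]; exact hall v hv y hy h huy
    · exact (hall x hx v hv hux h).symm
  have hgoodP : ∀ x, ∀ u ∈ N, u ∈ P x → nx u ∉ P x → u ∈ Gd := by
    intro x u hu h1 h2
    refine Finset.mem_filter.2 ⟨hu, ?_⟩
    have hnu := (hg u hu).1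
    have : ∃ v ∈ H, G.Adj (nx u) v ∧ v ≠ x := by
      by_contra hcon; push Not at hcon
      exact h2 (mem_PV.2 ⟨hnu, hcon⟩)
    obtain ⟨v, hv, hv1, hv2⟩ := this
    exact ⟨x, (PV_adj h1).1, v, hv, hv2.symm, (PV_adj h1).2, hv1⟩
  have hgoodP' : ∀ x, ∀ u ∈ N, u ∉ P x → nx u ∈ P x → u ∈ Gd := by
    intro x u hu h1 h2
    refine Finset.mem_filter.2 ⟨hu, ?_⟩
    have : ∃ v ∈ H, G.Adj u v ∧ v ≠ x := by
      by_contra hcon; push Not at hcon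
      exact h1 (mem_PV.2 ⟨hu, hcon⟩)
    obtain ⟨v, hv, hv1, hv2⟩ := this
    exact ⟨v, hv, x, (PV_adj h2).1, hv2, hv1, (PV_adj h2).2⟩
  have hPN : ∀ x, P x ⊆ N := fun x u hu => (mem_PV.1 hu).1
  have hNP : ∀ x, (N \ P x).Nonempty := fun x => PV_not_all hX hH (by omega) x
  -- in/out transitions
  have hout : ∀ x, (P x).Nonempty → ∃ u ∈ Gd, u ∈ P x := by
    intro x hx
    obtain ⟨u, hu, hu'⟩ := htr (N \ P x) Finset.sdiff_subset (hNP x) (by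
      rw [Finset.sdiff_sdiff_eq_self (hPN x)]; exact hx)
    rw [Finset.sdiff_sdiff_eq_self (hPN x)] at hu
    exact ⟨u, hgoodP x u (hPN x hu) hu (Finset.mem_sdiff.1 hu').2, hu⟩
  have hin : ∀ x, (P x).Nonempty → ∃ u ∈ Gd, nx u ∈ P x := by
    intro x hx
    obtain ⟨u, hu, hu'⟩ := htr (P x) (hPN x) hx (hNP x)
    exact ⟨u, hgoodP' x u (Finset.mem_sdiff.1 hu).1 (Finset.mem_sdiff.1 hu).2 hu', hu'⟩
  have hBdB : Bd.card ≤ B := by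
    have : Bd ⊆ H.biUnion P := by
      intro u hu
      obtain ⟨x, hx, h1, _⟩ := hbad u hu
      exact Finset.mem_biUnion.2 ⟨x, hx, h1⟩
    exact (Finset.card_le_card this).trans Finset.card_biUnion_le
  have hgap2 : ∀ u ∈ N, 2 ≤ g u := by
    intro u hu
    obtain ⟨h1, h2, h3', _, p, hp, hp', _⟩ := hg u hu
    have := hH.gap2 hX.lg (p := p) (k := g u) (by omega) (by omega) (hp ▸ hu) (hp' ▸ h1)
    omega
  have hgapL : ∀ u ∈ N, ∀ x ∈ H, ∀ y ∈ H, x ≠ y → G.Adj u x → G.Adj (nx u) y → ∀ k : ℕ,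
      (∀ v ∈ H, v ≠ x → v ≠ y → ∀ T : Finset V, (∀ w ∈ H, G.Adj v w → w ∈ T) → k ≤ T.card) → k + 2 ≤ g u := by
    intro u hu x hx y hy hxy hux huy k hk
    obtain ⟨l, hl, hlen⟩ := h2c.long hH h3 hx hy hxy k hk
    obtain ⟨h1, h2, h3', _, p, hp, hp', _⟩ := hg u hu
    have := hX.lg.gap hl hH.off (p := p) (k := g u) (by omega) (by omega) (by rw [hp]; exact hux) (by rw [hp']; exact huy)
    omega
  obtain ⟨z, hz⟩ := hH.ne
  have hd1 : N.card + 1 ≤ δ := by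
    have := hH.indep hX {z} (by simpa using hz) (by simp)
    simpa using this
  -- number of good vertices
  have hgam : 4 ≤ H.card → 4 ≤ Gd.card := by
    intro h4
    by_contra hlt
    let t : V → V := fun u => if h : ∃ x, u ∈ P x then h.choose else u
    have ht1 : ∀ u x, u ∈ P x → t u = x := by
      intro u x hux
      have h : ∃ x, u ∈ P x := ⟨x, hux⟩
      simp only [t, dif_pos h]
      exact PV_eq h.choose_spec hux
    have ht2 : ∀ u, (¬ ∃ x, u ∈ P x) → t u = u := by
      intro u h; simp only [t, dif_neg h]
    let T := Gd.image t
    have hTc : T.card ≤ Gd.card := Finset.card_image_le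
    have hne : (H \ T).Nonempty := by
      apply Finset.sdiff_nonempty_of_card_lt_card; omega
    have := hH.cut hX (H \ T) Finset.sdiff_subset hne T Finset.sdiff_disjoint ?_ ?_
    · omega
    · intro a ha b hb hab
      obtain ⟨haH, haT⟩ := Finset.mem_sdiff.1 ha
      rcases hH.cl a haH b hab with h | h
      · by_contra hbT; exact hb (Finset.mem_sdiff.2 ⟨h, hbT⟩)
      · have hbN : b ∈ N := mem_NC.2 ⟨h, a, haH, hab.symm⟩
        by_cases hbP : ∃ x, b ∈ P x
        · obtain ⟨x, hx⟩ := hbP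
          have hax := (mem_PV.1 hx).2 a haH hab.symm
          obtain ⟨u, hu, hux⟩ := hout x ⟨b, hx⟩
          exact absurd (Finset.mem_image.2 ⟨u, hu, (ht1 u x hux).trans hax.symm⟩) haT
        · have hbG : b ∈ Gd := by
            by_contra hbG
            have : b ∈ Bd := Finset.mem_filter.2 ⟨hbN, fun h => hbG (Finset.mem_filter.2 ⟨hbN, h⟩)⟩
            obtain ⟨x, _, hx, _⟩ := hbad b this
            exact hbP ⟨x, hx⟩
          exact Finset.mem_image.2 ⟨b, hbG, ht2 b hbP⟩
    · obtain ⟨i, hi⟩ := hH.exists_off hX.lg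
      refine ⟨f i, fun h => hH.off _ (Finset.mem_sdiff.1 h).1 i rfl, ?_⟩
      intro hT
      obtain ⟨u, hu, hui⟩ := Finset.mem_image.1 hT
      have huN : u ∈ N := (Finset.mem_filter.1 hu).1
      by_cases hx : ∃ x, u ∈ P x
      · obtain ⟨x, hx⟩ := hx
        rw [ht1 u x hx] at hui
        exact hH.off _ (PV_adj hx).1 i hui.symm
      · rw [ht2 u hx] at hui; exact hi (hui ▸ huN)
  have hsplit : ∑ u ∈ N, g u = ∑ u ∈ Gd, g u + ∑ u ∈ Bd, g u :=
    (Finset.sum_filter_add_sum_filter_not N good g).symm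
  have hBdsum : 2 * Bd.card ≤ ∑ u ∈ Bd, g u := by
    have := Finset.card_nsmul_le_sum Bd g 2 (fun u hu => hgap2 u (Finset.mem_filter.1 hu).1)
    rw [smul_eq_mul, mul_comm] at this; exact this
  have hdegH : ∀ v ∈ H, δ + B + 1 ≤ H.card + N.card + (P v).card := by
    intro v hv
    have := PV_deg hX hH hv (H.erase v) (fun w hw h => Finset.mem_erase.2 ⟨h.ne', hw⟩)
    rw [Finset.card_erase_of_mem hv] at this
    have h1 : δ + B ≤ H.card - 1 + N.card + (P v).card := this
    omega
  by_cases hd : δ = N.card + 1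
  · -- d = 1, `H` is a clique
    have hcl : ∀ u ∈ H, ∀ v ∈ H, u ≠ v → G.Adj u v := by
      intro u hu v hv huv
      by_contra hadj
      have := hH.indep hX {u, v} (by intro w hw; simp at hw; rcases hw with rfl | rfl <;> assumption) (by
        intro a ha b hb; simp at ha hb
        rcases ha with rfl | rfl <;> rcases hb with rfl | rfl
        · exact G.irrefl
        · exact hadj
        · exact fun h => hadj h.symm
        · exact G.irrefl)
      rw [Finset.card_pair huv] at this
      have h' : N.card + 2 ≤ δ := this
      omega
    have hGdsum : (H.card + 1) * Gd.card ≤ ∑ u ∈ Gd, g u := by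
      have := Finset.card_nsmul_le_sum Gd g (H.card + 1) (fun u hu => by
        obtain ⟨huN, x, hx, y, hy, hxy, h1, h2⟩ := Finset.mem_filter.1 hu
        have := hgapL u huN x hx y hy hxy h1 h2 (H.card - 1) (by
          intro v hv _ _ T hT
          rw [← Finset.card_erase_of_mem hv]
          apply Finset.card_le_card
          intro w hw
          rw [Finset.mem_erase] at hw
          exact hT w hw.2 (hcl v hv w hw.2 hw.1.symm))
        omega)
      simp only [smul_eq_mul] at this; rw [mul_comm]; exact this
    have hB2 : B + 4 ≤ 2 * H.card := by
      obtain ⟨w, hw, hwz⟩ := Finset.exists_mem_ne (by omega : 1 < H.card) z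
      have h1 := hdegH z hz
      have h2 := hdegH w hw
      have h3 : (P z).card + (P w).card ≤ B := by
        have := Finset.sum_le_sum_of_subset (f := fun x => (P x).card) (s := {z, w}) (t := H) (by
          intro a ha; simp at ha; rcases ha with rfl | rfl <;> assumption)
        rw [Finset.sum_pair hwz.symm] at this
        exact this
      omega
    rcases h3.eq_or_lt with he | hlt
    · rw [← he] at hGdsum hB2; omega
    · have := hgam hlt
      obtain ⟨h', hh⟩ : ∃ h', H.card = h' + 4 := ⟨H.card - 4, by omega⟩
      rw [hh] at hGdsum hB2
      have : 4 * h' ≤ h' * Gd.card := by rw [mul_comm]; exact Nat.mul_le_mul_left _ this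
      have e : (h' + 4 + 1) * Gd.card = h' * Gd.card + 5 * Gd.card := by ring
      omega
  · obtain ⟨d, hd2⟩ : ∃ d, δ = N.card + d + 2 := ⟨δ - N.card - 2, by omega⟩
    let b : V → ℕ := fun u => ∑ x ∈ H, if u ∈ P x then (P x).card else 0
    have hb : ∀ u, ∀ x ∈ H, G.Adj u x → b u ≤ (P x).card := by
      intro u x hx hux
      have : b u = ∑ y ∈ H, if y = x then (if u ∈ P x then (P x).card else 0) else 0 := by
        apply Finset.sum_congr rfl
        intro y hy
        split_ifs with h1 h2 h3 h4 h5
        · rw [h2]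
        · rw [h2] at h1; exact absurd h1 h3
        · exact absurd ((mem_PV.1 h1).2 x hx hux).symm h2
        · rw [h4] at h1; exact absurd h5 h1
        · rfl
        · rfl
      rw [this, Finset.sum_ite_eq' H x, if_pos hx]
      split_ifs <;> omega
    have hGdsum : (d + 4) * Gd.card + (∑ u ∈ Gd, b u + ∑ u ∈ Gd, b (nx u)) ≤ ∑ u ∈ Gd, g u := by
      have : ∑ u ∈ Gd, ((d + 4) + (b u + b (nx u))) ≤ ∑ u ∈ Gd, g u := by
        apply Finset.sum_le_sum
        intro u hu
        obtain ⟨huN, x, hx, y, hy, hxy, h1, h2⟩ := Finset.mem_filter.1 hu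
        have e1 := hb u x hx h1
        have e2 := hb (nx u) y hy h2
        have := hgapL u huN x hx y hy hxy h1 h2 (d + 2 + (P x).card + (P y).card) (by
          intro v hv hvx hvy T hT
          have h1 : δ + B ≤ T.card + N.card + (P v).card := PV_deg hX hH hv T hT
          have h2 : (P v).card + ((P x).card + (P y).card) ≤ B := by
            have := Finset.sum_le_sum_of_subset (f := fun x => (P x).card) (s := {v, x, y}) (t := H) (by
              intro a ha; simp at ha; rcases ha with rfl | rfl | rfl <;> assumption)
            rw [Finset.sum_insert (by simp [hvx, hvy]), Finset.sum_pair hxy] at this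
            exact this
          omega)
        omega
      rw [Finset.sum_add_distrib, Finset.sum_const, smul_eq_mul, mul_comm, Finset.sum_add_distrib] at this
      exact this
    have hs1 : B ≤ ∑ u ∈ Gd, b u := by
      rw [Finset.sum_comm]
      apply Finset.sum_le_sum
      intro x hx
      rcases (P x).eq_empty_or_nonempty with h0 | h0
      · rw [h0]; simp
      · obtain ⟨u, hu, hux⟩ := hout x h0
        refine le_trans ?_ (Finset.single_le_sum (f := fun u => if u ∈ P x then (P x).card else 0) (fun _ _ => Nat.zero_le _) hu)
        simp [hux]
    have hs2 : B ≤ ∑ u ∈ Gd, b (nx u) := by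
      rw [Finset.sum_comm]
      apply Finset.sum_le_sum
      intro x hx
      rcases (P x).eq_empty_or_nonempty with h0 | h0
      · rw [h0]; simp
      · obtain ⟨u, hu, hux⟩ := hin x h0
        refine le_trans ?_ (Finset.single_le_sum (f := fun u => if nx u ∈ P x then (P x).card else 0) (fun _ _ => Nat.zero_le _) hu)
        simp [hux]
    have e : (d + 4) * Gd.card = d * Gd.card + 4 * Gd.card := by ring
    rcases h3.eq_or_lt with he | hlt
    · have h1 := hdegH z hz
      have h2 : (P z).card ≤ B := Finset.single_le_sum (f := fun x => (P x).card) (fun _ _ => Nat.zero_le _) hz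
      have : d = 0 := by omega
      subst this
      omega
    · have h4 := hgam hlt
      have : 4 * d ≤ d * Gd.card := by rw [mul_comm]; exact Nat.mul_le_mul_left _ h4
      omega
end
end Nik

namespace Nik
variable {V : Type*} [Fintype V] [DecidableEq V] {G : SimpleGraph V}

structure LB (G : SimpleGraph V) (H : Finset V) (D : Finset V) (v : V) : Prop where
  sub : D ⊆ H
  ne : D.Nonempty
  vD : v ∉ D
  ex : ∃ w ∈ H, w ∉ D ∧ w ≠ v
  cl : ∀ a ∈ D, ∀ b ∈ H, b ∉ D → G.Adj a b → b = v

section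
variable {f : ℤ → V} {c δ : ℕ} {H : Finset V}

theorem LB.edge (hH : Cmp G f H) {D : Finset V} {v : V} (h : LB G H D v) : v ∈ H ∧ ∃ a ∈ D, G.Adj a v := by
  obtain ⟨w, hw, hwD, _⟩ := h.ex
  obtain ⟨a, ha, b, hb, hbD, hab⟩ := hH.conn D h.sub h.ne (fun e => hwD (e ▸ hw))
  have := h.cl a ha b hb hbD hab
  subst this
  exact ⟨hb, a, ha, hab⟩

theorem LB.path (hX : Ctx G f c δ) (hH : Cmp G f H) {D : Finset V} {v : V} (h : LB G H D v)
    (hmin : ∀ D' v', LB G H D' v' → D' ⊆ D → D.card ≤ D'.card) {s : V} (hs : s ∈ D) :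
    ∃ l, IsPth G (insert v D) s v l ∧ (δ - (NC G f D).card) + 1 ≤ l.length := by
  have hvH := (h.edge hH).1
  have hsv : s ≠ v := fun e => h.vD (e ▸ hs)
  have hnb : ∀ a ∈ D, ∀ b ∈ H, G.Adj a b → b ∈ insert v D := by
    intro a ha b hb hab
    rw [Finset.mem_insert]
    by_cases hbD : b ∈ D
    · exact Or.inr hbD
    · exact Or.inl (h.cl a ha b hb hbD hab)
  have hdeg : ∀ w ∈ D, ∀ T : Finset V, (∀ z ∈ insert v D, G.Adj w z → z ∈ T) → δ - (NC G f D).card ≤ T.card := by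
    intro w hw T hT
    have h1 := hH.deg hX (h.sub hw) T (fun z hz hwz => hT z (hnb w hw z hz hwz) hwz)
    have h2 := Finset.card_le_card (NC_mono (G := G) (f := f) (Finset.singleton_subset_iff.2 hw))
    omega
  refine EG _ (insert v D) s v (Finset.mem_insert_of_mem hs) (Finset.mem_insert_self _ _) hsv ?_ ?_ ?_ ?_
  · intro F hF hFn hsF hvF u
    have hFD : F ⊆ D := by
      intro a ha
      rcases Finset.mem_insert.1 (hF ha) with e | e
      · exact absurd (e ▸ ha) hvF
      · exact e
    by_contra hcon
    push Not at hcon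
    have hlt : F.card < D.card := Finset.card_lt_card (hFD.ssubset_of_ne (fun e => hsF (e ▸ hs)))
    by_cases hu : u ∈ F
    · obtain ⟨a, ha, b, hb, hbF, hab⟩ := hH.conn F (hFD.trans h.sub) hFn (fun e => hvF (e ▸ hvH))
      exact hcon a ha b (hnb a (hFD ha) b hb hab) hbF (fun e => hbF (e ▸ hu)) hab
    · have : LB G H F u := by
        refine ⟨hFD.trans h.sub, hFn, hu, ?_, ?_⟩
        · by_cases hsu : s = u
          · exact ⟨v, hvH, hvF, fun e => hsv (hsu.trans e.symm)⟩
          · exact ⟨s, h.sub hs, hsF, hsu⟩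
        · intro a ha b hb hbF hab
          by_contra hbu
          exact hcon a ha b (hnb a (hFD ha) b hb hab) hbF hbu hab
      have := hmin F u this hFD
      omega
  · intro F hF hsF hvF
    have hFD : F ⊆ D := by
      intro a ha
      rcases Finset.mem_insert.1 (hF ha) with e | e
      · exact absurd (e ▸ ha) hvF
      · exact e
    obtain ⟨a, ha, b, hb, hbF, hab⟩ := hH.conn F (hFD.trans h.sub) ⟨s, hsF⟩ (fun e => hvF (e ▸ hvH))
    exact ⟨a, ha, b, hnb a (hFD ha) b hb hab, hbF, hab⟩
  · intro w hw _ hwv T hT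
    rcases Finset.mem_insert.1 hw with e | e
    · exact absurd e hwv
    · exact hdeg w e T hT
  · by_cases h3 : 3 ≤ (insert v D).card
    · exact Or.inr h3
    · left
      rw [Finset.card_insert_of_notMem h.vD] at h3
      have := hdeg s hs ((insert v D).erase s) (fun z hz hsz => Finset.mem_erase.2 ⟨hsz.ne', hz⟩)
      rw [Finset.card_erase_of_mem (Finset.mem_insert_of_mem hs), Finset.card_insert_of_notMem h.vD] at this
      omega

theorem LB.three (hX : Ctx G f c δ) (hH : Cmp G f H) {D : Finset V} {v : V} (h : LB G H D v) : 3 ≤ (NC G f D).card := by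
  have hvH := (h.edge hH).1
  have := hH.cut hX D h.sub h.ne (insert v (NC G f D)) ?_ ?_ ?_
  · have := Finset.card_insert_le v (NC G f D); omega
  · rw [Finset.disjoint_left]; intro a ha ha'
    rcases Finset.mem_insert.1 ha' with e | e
    · exact h.vD (e ▸ ha)
    · obtain ⟨i, hi⟩ := NC_in e
      exact hH.off a (h.sub ha) i hi
  · intro a ha b hb hab
    rw [Finset.mem_insert]
    rcases hH.cl a (h.sub ha) b hab with e | e
    · exact Or.inl (h.cl a ha b e hb hab)
    · exact Or.inr (mem_NC.2 ⟨e, a, ha, hab.symm⟩)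
  · obtain ⟨i, hi⟩ := hH.exists_off hX.lg
    refine ⟨f i, fun e => hH.off _ (h.sub e) i rfl, ?_⟩
    rw [Finset.mem_insert]
    rintro (e | e)
    · exact hH.off v hvH i e
    · exact hi (NC_mono h.sub e)

theorem case2 (hX : Ctx G f c δ) (hH : Cmp G f H) (h2c : ¬ TwoC G H) : 4 * δ ≤ c + 8 := by
  classical
  have hex : ∃ D v, LB G H D v := by
    unfold TwoC at h2c
    push Not at h2c
    obtain ⟨F, hF, hFn, u, hu, ⟨w, hw, hwF, hwu⟩, hcl⟩ := h2c
    refine ⟨F, u, hF, hFn, hu, ⟨w, hw, hwF, hwu⟩, ?_⟩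
    intro a ha b hb hbF hab
    by_contra hbu
    exact hcl a ha b hb hbF hbu hab
  obtain ⟨D1, v1, h1, hm1⟩ := exists_lobe G H (LB G H) hex
  have hv1 := (h1.edge hH).1
  let K := (H \ D1).erase v1
  have hKmem : ∀ a, a ∈ K ↔ a ≠ v1 ∧ a ∈ H ∧ a ∉ D1 := by intro a; simp [K]
  have hK1 : ∀ a ∈ K, ∀ b ∈ D1, ¬ G.Adj a b := by
    intro a ha b hb hab
    rw [hKmem] at ha
    exact ha.1 (h1.cl b hb a ha.2.1 ha.2.2 hab.symm)
  have hLK : LB G H K v1 := by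
    refine ⟨fun a ha => ((hKmem a).1 ha).2.1, ?_, by simp [K], ?_, ?_⟩
    · obtain ⟨w, hw, hwD, hwv⟩ := h1.ex
      exact ⟨w, (hKmem w).2 ⟨hwv, hw, hwD⟩⟩
    · obtain ⟨w, hw⟩ := h1.ne
      exact ⟨w, h1.sub hw, fun e => ((hKmem w).1 e).2.2 hw, fun e => h1.vD (e ▸ hw)⟩
    · intro a ha b hb hbK hab
      by_contra hbv
      have hbD : b ∈ D1 := by
        by_contra hbD; exact hbK ((hKmem b).2 ⟨hbv, hb, hbD⟩)
      exact hK1 a ha b hbD hab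
  obtain ⟨D2, v2, ⟨h2, h2K⟩, hm2⟩ := exists_lobe G H (fun D v => LB G H D v ∧ D ⊆ K) ⟨K, v1, hLK, Finset.Subset.refl _⟩
  obtain ⟨hv2, a2, ha2, hav2⟩ := h2.edge hH
  have hv1D2 : v1 ∉ D2 := fun e => ((hKmem v1).1 (h2K e)).1 rfl
  have hv2D1 : v2 ∉ D1 := fun e => hK1 a2 (h2K ha2) v2 e hav2
  have hD12 : ∀ a ∈ D1, a ∉ D2 := fun a ha ha' => ((hKmem a).1 (h2K ha')).2.2 ha
  let M := (H \ D1) \ D2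
  have hM : ∀ a, a ∈ M ↔ a ∈ H ∧ a ∉ D1 ∧ a ∉ D2 := by intro a; simp [M, and_assoc]
  obtain ⟨lm, hlm⟩ : ∃ l, IsPth G M v1 v2 l := by
    refine reach ((hM _).2 ⟨hv1, h1.vD, hv1D2⟩) ((hM _).2 ⟨hv2, hv2D1, h2.vD⟩) ?_
    intro F hF hF1 hF2
    have hv2F : v2 ∉ F ∪ D1 := by rw [Finset.mem_union]; rintro (e | e); exacts [hF2 e, hv2D1 e]
    obtain ⟨a, ha, b, hb, hbF, hab⟩ := hH.conn (F ∪ D1)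
      (Finset.union_subset (fun a ha => ((hM a).1 (hF ha)).1) h1.sub) ⟨v1, Finset.mem_union_left _ hF1⟩
      (fun e => hv2F (e ▸ hv2))
    rw [Finset.mem_union, not_or] at hbF
    rcases Finset.mem_union.1 ha with ha | ha
    · refine ⟨a, ha, b, (hM b).2 ⟨hb, hbF.2, ?_⟩, hbF.1, hab⟩
      intro hb2
      have haM := (hM a).1 (hF ha)
      have := h2.cl b hb2 a haM.1 haM.2.2 hab.symm
      exact hF2 (this ▸ ha)
    · have := h1.cl a ha b hb hbF.2 hab
      exact absurd (this ▸ hF1) hbF.1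
  set N1 := NC G f D1 with hN1
  set N2 := NC G f D2 with hN2
  have hlong : ∀ s ∈ D1, ∀ t ∈ D2, ∃ l, IsPth G H s t l ∧ (δ - N1.card) + (δ - N2.card) + 1 ≤ l.length := by
    intro s hs t ht
    obtain ⟨l1, hl1, hlen1⟩ := h1.path hX hH (fun D' v' h _ => hm1 D' v' h) hs
    obtain ⟨l2, hl2, hlen2⟩ := h2.path hX hH (fun D' v' h hD => hm2 D' v' ⟨h, hD.trans h2K⟩) ht
    obtain ⟨l3, hl3, hlen3⟩ := hl1.glue hlm (by
      intro v hv hvM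
      rcases Finset.mem_insert.1 hv with e | e
      · exact e
      · exact absurd e ((hM v).1 hvM).2.1)
    obtain ⟨l4, hl4, hlen4⟩ := hl3.glue hl2.rev (by
      intro v hv hv'
      rcases Finset.mem_insert.1 hv' with e | e
      · exact e
      · exfalso
        rcases Finset.mem_union.1 hv with h | h
        · rcases Finset.mem_insert.1 h with h | h
          · exact hv1D2 (h ▸ e)
          · exact hD12 v h e
        · exact ((hM v).1 h).2.2 e)
    refine ⟨l4, hl4.mono ?_, ?_⟩
    · intro v hv
      simp only [Finset.mem_union, Finset.mem_insert] at hv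
      rcases hv with ((rfl | h) | h) | (rfl | h)
      · exact hv1
      · exact h1.sub h
      · exact ((hM v).1 h).1
      · exact hv2
      · exact h2.sub h
    · have := hlm.length_pos
      rw [List.length_reverse] at hlen4
      rw [← hN1] at hlen1
      rw [← hN2] at hlen2
      omega
  have hn1 : 3 ≤ N1.card := h1.three hX hH
  have hn2 : 3 ≤ N2.card := h2.three hX hH
  have hN1m : N1 ⊆ NC G f H := NC_mono h1.sub
  have hN2m : N2 ⊆ NC G f H := NC_mono h2.sub
  have hd : (NC G f H).card + 2 ≤ δ := by
    obtain ⟨a, ha⟩ := h1.ne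
    have hne : a ≠ a2 := fun e => hD12 a ha (e ▸ ha2)
    have hna : ¬ G.Adj a2 a := hK1 a2 (h2K ha2) a ha
    have := hH.indep hX {a, a2} (by
        intro w hw; simp at hw; rcases hw with rfl | rfl
        · exact h1.sub ha
        · exact h2.sub ha2) (by
      intro x hx y hy; simp at hx hy
      rcases hx with rfl | rfl <;> rcases hy with rfl | rfl
      · exact G.irrefl
      · exact fun h => hna h.symm
      · exact hna
      · exact G.irrefl)
    rw [Finset.card_pair hne] at this
    exact this
  have hc1 := Finset.card_le_card hN1m
  have hc2 := Finset.card_le_card hN2m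
  let U := N1 ∪ N2
  have hUN : U ⊆ NC G f H := Finset.union_subset hN1m hN2m
  have hUc : U.card + (N1 ∩ N2).card = N1.card + N2.card := Finset.card_union_add_card_inter N1 N2
  have hU1 : N1.card ≤ U.card := Finset.card_le_card Finset.subset_union_left
  obtain ⟨nx, g, hg, hsum, htr⟩ := hX.lg.cyc.gaps U (fun u hu => NC_in (hUN hu)) (by omega)
  let mix : V → Prop := fun u => (u ∈ N1 ∧ nx u ∈ N2) ∨ (u ∈ N2 ∧ nx u ∈ N1)
  let Mx := U.filter mix
  have hMq : N1 ∩ N2 ⊆ Mx := by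
    intro u hu
    rw [Finset.mem_inter] at hu
    have huU : u ∈ U := Finset.mem_union_left _ hu.1
    refine Finset.mem_filter.2 ⟨huU, ?_⟩
    rcases Finset.mem_union.1 (hg u huU).1 with h | h
    · exact Or.inr ⟨hu.2, h⟩
    · exact Or.inl ⟨hu.1, h⟩
  have hMqc := Finset.card_le_card hMq
  have hM2 : 2 ≤ Mx.card := by
    by_cases hq : 2 ≤ (N1 ∩ N2).card
    · omega
    · have e1 : U \ N2 = N1 \ N2 := by ext a; simp [U]; tauto
      have e2 : U \ N1 = N2 \ N1 := by ext a; simp [U]; tauto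
      have c1 := Finset.card_sdiff_add_card_inter N1 N2
      have c2 := Finset.card_sdiff_add_card_inter N2 N1
      rw [Finset.inter_comm] at c2
      obtain ⟨u, hu, hu'⟩ := htr N2 Finset.subset_union_right (Finset.card_pos.1 (by omega)) (by
        rw [e1]; exact Finset.card_pos.1 (by omega))
      obtain ⟨w, hw, hw'⟩ := htr N1 Finset.subset_union_left (Finset.card_pos.1 (by omega)) (by
        rw [e2]; exact Finset.card_pos.1 (by omega))
      have hu1 := hu; have hw1 := hw
      rw [e1, Finset.mem_sdiff] at hu1
      rw [e2, Finset.mem_sdiff] at hw1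
      have huw : u ≠ w := by rintro rfl; exact hw1.2 hu1.1
      rw [← Finset.card_pair huw]
      apply Finset.card_le_card
      intro z hz
      simp at hz
      rcases hz with rfl | rfl
      · exact Finset.mem_filter.2 ⟨(Finset.mem_sdiff.1 hu).1, Or.inl ⟨hu1.1, hu'⟩⟩
      · exact Finset.mem_filter.2 ⟨(Finset.mem_sdiff.1 hw).1, Or.inr ⟨hw1.1, hw'⟩⟩
  have hgap2 : ∀ u ∈ U, 2 ≤ g u := by
    intro u hu
    obtain ⟨h1, h2, h3', _, p, hp, hp', _⟩ := hg u hu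
    have := hH.gap2 hX.lg (p := p) (k := g u) (by omega) (by omega) (hp ▸ hUN hu) (hp' ▸ hUN h1)
    omega
  have hgapL : ∀ u ∈ Mx, (δ - N1.card) + (δ - N2.card) + 2 ≤ g u := by
    intro u hu
    obtain ⟨huU, hmix⟩ := Finset.mem_filter.1 hu
    obtain ⟨h1, h2, h3', _, p, hp, hp', _⟩ := hg u huU
    rcases hmix with ⟨ha, hb⟩ | ⟨ha, hb⟩
    · obtain ⟨_, s, hs, hus⟩ := mem_NC.1 ha
      obtain ⟨_, t, ht, hut⟩ := mem_NC.1 hb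
      obtain ⟨l, hl, hlen⟩ := hlong s hs t ht
      have := hX.lg.gap hl hH.off (p := p) (k := g u) (by omega) (by omega) (by rw [hp]; exact hus) (by rw [hp']; exact hut)
      omega
    · obtain ⟨_, s, hs, hus⟩ := mem_NC.1 hb
      obtain ⟨_, t, ht, hut⟩ := mem_NC.1 ha
      obtain ⟨l, hl, hlen⟩ := hlong s hs t ht
      have := hX.lg.gap hl.rev hH.off (p := p) (k := g u) (by omega) (by omega) (by rw [hp]; exact hut) (by rw [hp']; exact hus)
      rw [List.length_reverse] at this
      omega
  have hsplit : ∑ u ∈ U, g u = ∑ u ∈ Mx, g u + ∑ u ∈ U.filter (fun u => ¬ mix u), g u :=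
    (Finset.sum_filter_add_sum_filter_not U mix g).symm
  have hmc : Mx.card + (U.filter (fun u => ¬ mix u)).card = U.card := Finset.card_filter_add_card_filter_not (s := U) mix
  have s1 : Mx.card * ((δ - N1.card) + (δ - N2.card) + 2) ≤ ∑ u ∈ Mx, g u := by
    have := Finset.card_nsmul_le_sum Mx g _ hgapL
    rwa [smul_eq_mul] at this
  have s2 : (U.filter (fun u => ¬ mix u)).card * 2 ≤ ∑ u ∈ U.filter (fun u => ¬ mix u), g u := by
    have := Finset.card_nsmul_le_sum (U.filter (fun u => ¬ mix u)) g 2 (fun u hu => hgap2 u (Finset.mem_filter.1 hu).1)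
    rwa [smul_eq_mul] at this
  obtain ⟨e, he⟩ : ∃ e, (δ - N1.card) + (δ - N2.card) = e + 4 := ⟨(δ - N1.card) + (δ - N2.card) - 4, by omega⟩
  obtain ⟨μ, hμ⟩ : ∃ μ, Mx.card = μ + 2 := ⟨Mx.card - 2, by omega⟩
  rw [he, hμ] at s1
  have e1 : (μ + 2) * (e + 4 + 2) = μ * e + 2 * e + 6 * μ + 12 := by ring
  have := Nat.zero_le (μ * e)
  omega
end
end Nik

namespace Nik
variable {V : Type*} [Fintype V] [DecidableEq V] {G : SimpleGraph V}

structure Pair (G : SimpleGraph V) (f : ℤ → V) (δ : ℕ) (x y : V) (X : Finset V) : Prop where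
  xy : G.Adj x y
  ofx : ∀ i, f i ≠ x
  ofy : ∀ i, f i ≠ y
  inC : ∀ u ∈ X, ∃ i, f i = u
  nbx : ∀ u ∈ X, G.Adj u x
  nby : ∀ u ∈ X, G.Adj u y
  clx : ∀ w, G.Adj x w → w = y ∨ w ∈ X
  cly : ∀ w, G.Adj y w → w = x ∨ w ∈ X
  card : X.card + 1 = δ

section
variable {f : ℤ → V} {c δ : ℕ} {H : Finset V}

theorem Cmp.pair (hX : Ctx G f c δ) (hH : Cmp G f H) : 4 * δ ≤ c + 8 ∨ ∃ x y X, H = {x, y} ∧ Pair G f δ x y X := by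
  by_cases h2c : TwoC G H
  swap
  · exact Or.inl (case2 hX hH h2c)
  by_cases h3 : 3 ≤ H.card
  · exact Or.inl (case1 hX hH h2c h3)
  right
  have h1 := Finset.card_pos.2 hH.ne
  obtain ⟨z, hz⟩ := hH.ne
  have hd1 : (NC G f H).card + 1 ≤ δ := by
    have := hH.indep hX {z} (by simpa using hz) (by simp)
    simpa using this
  have hsub : ∀ v ∈ H, NC G f {v} ⊆ NC G f H := fun v hv => NC_mono (by simpa using hv)
  have hdz := hH.deg hX hz (H.erase z) (fun w hw h => Finset.mem_erase.2 ⟨h.ne', hw⟩)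
  rw [Finset.card_erase_of_mem hz] at hdz
  have := Finset.card_le_card (hsub z hz)
  have h2 : H.card = 2 := by omega
  obtain ⟨x, y, hxy, rfl⟩ := Finset.card_eq_two.1 h2
  have hx : x ∈ ({x, y} : Finset V) := by simp
  have hy : y ∈ ({x, y} : Finset V) := by simp
  have dx := hH.deg hX hx {y} (by
    intro w hw h; simp at hw; rcases hw with rfl | rfl
    · exact absurd h (G.irrefl)
    · simp)
  have dy := hH.deg hX hy {x} (by
    intro w hw h; simp at hw; rcases hw with rfl | rfl
    · simp
    · exact absurd h (G.irrefl))
  rw [Finset.card_singleton] at dx dy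
  have ex := Finset.eq_of_subset_of_card_le (hsub x hx) (by omega)
  have ey := Finset.eq_of_subset_of_card_le (hsub y hy) (by omega)
  have hc := Finset.card_le_card (hsub x hx)
  refine ⟨x, y, NC G f {x, y}, rfl, ?_, hH.off x hx, hH.off y hy, fun u hu => NC_in hu, ?_, ?_, ?_, ?_, by omega⟩
  · obtain ⟨a, ha, b, hb, hbF, hab⟩ := hH.conn {x} (by simp) (by simp) (by
      intro e
      have : y ∈ ({x} : Finset V) := by rw [e]; simp
      simp at this; exact hxy this.symm)
    simp at ha hb hbF
    subst ha
    rcases hb with e | e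
    · exact absurd e hbF
    · rw [← e]; exact hab
  · intro u hu
    rw [← ex] at hu
    obtain ⟨_, v, hv, h⟩ := mem_NC.1 hu
    simp at hv; subst hv; exact h
  · intro u hu
    rw [← ey] at hu
    obtain ⟨_, v, hv, h⟩ := mem_NC.1 hu
    simp at hv; subst hv; exact h
  · intro w hw
    rcases hH.cl x hx w hw with h | h
    · simp at h; rcases h with rfl | h
      · exact absurd hw (G.irrefl)
      · exact Or.inl h
    · exact Or.inr (mem_NC.2 ⟨h, x, hx, hw.symm⟩)
  · intro w hw
    rcases hH.cl y hy w hw with h | h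
    · simp at h; rcases h with h | rfl
      · exact Or.inl h
      · exact absurd hw (G.irrefl)
    · exact Or.inr (mem_NC.2 ⟨h, y, hy, hw.symm⟩)

variable {x y : V} {X : Finset V}

theorem Pair.neg (h : Pair G f δ x y X) : Pair G (fun i => f (-i)) δ x y X :=
  ⟨h.xy, fun i => h.ofx _, fun i => h.ofy _, fun u hu => by
    obtain ⟨i, hi⟩ := h.inC u hu; exact ⟨-i, by simpa using hi⟩, h.nbx, h.nby, h.clx, h.cly, h.card⟩

theorem Pair.pth (h : Pair G f δ x y X) : IsPth G {x, y} x y [x, y] := by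
  refine ⟨by simp [h.xy], by simp [h.xy.ne], by simp, by simp, by simp⟩

theorem Pair.off (h : Pair G f δ x y X) : ∀ v ∈ ({x, y} : Finset V), ∀ i, f i ≠ v := by
  intro v hv; simp at hv; rcases hv with rfl | rfl
  · exact h.ofx
  · exact h.ofy

theorem Pair.sp (h : Pair G f δ x y X) (hL : Lg G f c) {p k : ℤ} (h0 : 0 < k) (hk : k < c)
    (h1 : f p ∈ X) (h2 : f (p + k) ∈ X) : 3 ≤ k := by
  have := hL.gap h.pth h.off h0 hk (h.nbx _ h1) (h.nby _ h2)
  simp at this; omega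

theorem Pair.sp1 (h : Pair G f δ x y X) (hL : Lg G f c) {p : ℤ} (h1 : f p ∈ X) : f (p+1) ∉ X := by
  intro h2
  have := hL.cyc.three
  have := h.sp hL (k := 1) (by omega) (by omega) h1 h2
  omega

theorem Pair.sp2 (h : Pair G f δ x y X) (hL : Lg G f c) {p : ℤ} (h1 : f p ∈ X) : f (p+2) ∉ X := by
  intro h2
  have := hL.cyc.three
  have := h.sp hL (k := 2) (by omega) (by omega) h1 h2
  omega

/-- distance to another element of `X` -/
theorem Pair.far (h : Pair G f δ x y X) (hL : Lg G f c) {p q : ℤ} (h1 : f p ∈ X) (h2 : f q ∈ X) (hne : f p ≠ f q) :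
    ∃ k : ℤ, 3 ≤ k ∧ k + 3 ≤ c ∧ f (p + k) = f q := by
  obtain ⟨k, h0, hk, he⟩ := hL.cyc.dist p q hne
  rw [← he] at h2
  refine ⟨k, h.sp hL h0 hk h1 h2, ?_, he⟩
  have := h.sp hL (p := p + k) (k := c - k) (by omega) (by omega) h2 (by
    rw [show p + k + (c - k) = p + c by ring, hL.cyc.per]; exact h1)
  omega

/-- the shifted copy of `X` -/
noncomputable def Sx (f : ℤ → V) (X : Finset V) (k : ℤ) : Finset V := X.image (sh f k)

theorem Pair.mem_Sx (h : Pair G f δ x y X) (hL : Lg G f c) {k : ℤ} {v : V} :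
    v ∈ Sx f X k ↔ ∃ p, f p ∈ X ∧ v = f (p + k) := by
  rw [Sx, Finset.mem_image]
  constructor
  · rintro ⟨u, hu, rfl⟩
    obtain ⟨i, rfl⟩ := h.inC u hu
    exact ⟨i, hu, hL.cyc.sh_eq k i⟩
  · rintro ⟨p, hp, rfl⟩
    exact ⟨f p, hp, hL.cyc.sh_eq k p⟩

theorem card_Sx (hL : Lg G f c) {Y : Finset V} (hY : ∀ u ∈ Y, ∃ i, f i = u) (k : ℤ) : (Sx f Y k).card = Y.card := by
  apply Finset.card_image_of_injOn
  exact (hL.cyc.sh_injOn k).mono hY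

theorem Pair.disj3 (h : Pair G f δ x y X) (hL : Lg G f c) :
    Disjoint X (Sx f X 1) ∧ Disjoint (X ∪ Sx f X 1) (Sx f X 2) := by
  constructor
  · rw [Finset.disjoint_left]; intro v hv hv'
    obtain ⟨p, hp, rfl⟩ := (h.mem_Sx hL).1 hv'
    exact h.sp1 hL hp hv
  · rw [Finset.disjoint_left]; intro v hv hv'
    obtain ⟨p, hp, rfl⟩ := (h.mem_Sx hL).1 hv'
    rcases Finset.mem_union.1 hv with hv | hv
    · exact h.sp2 hL hp hv
    · obtain ⟨q, hq, e⟩ := (h.mem_Sx hL).1 hv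
      have e2 := hL.cyc.shift_eq (-1) e
      rw [show p + 2 + -1 = p + 1 by ring, show q + 1 + -1 = q by ring] at e2
      exact h.sp1 hL hp (e2 ▸ hq)

theorem Pair.card3 (h : Pair G f δ x y X) (hL : Lg G f c) : ((X ∪ Sx f X 1) ∪ Sx f X 2).card = 3 * X.card := by
  obtain ⟨h1, h2⟩ := h.disj3 hL
  rw [Finset.card_union_of_disjoint h2, Finset.card_union_of_disjoint h1, card_Sx hL h.inC, card_Sx hL h.inC]
  ring

theorem Pair.sub3 (h : Pair G f δ x y X) (hL : Lg G f c) : ((X ∪ Sx f X 1) ∪ Sx f X 2) ⊆ Cs f c := by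
  intro v hv
  rw [hL.cyc.mem_Cs]
  simp only [Finset.mem_union, h.mem_Sx hL] at hv
  rcases hv with (hv | ⟨p, _, hp⟩) | ⟨p, _, hp⟩
  · exact h.inC v hv
  · exact ⟨_, hp.symm⟩
  · exact ⟨_, hp.symm⟩

theorem Pair.cross (h : Pair G f δ x y X) (hL : Lg G f c) {p q j : ℤ} (hp : f p ∈ X) (hq : f q ∈ X) (hne : f p ≠ f q)
    (h1 : 1 ≤ j) (h2 : j ≤ 2) : ¬ G.Adj (f (p+1)) (f (q+j)) := by
  intro hadj
  obtain ⟨k, hk3, hkc, he⟩ := h.far hL hp hq hne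
  rw [← hL.cyc.shift_eq j he] at hadj
  rw [← he] at hq
  have := hL.cross0 h.pth h.off (p0 := p) (p1 := p+1) (p2 := p + k) (p3 := p + k + j) (by omega) (by omega)
    (by omega) (by omega) (h.nbx _ hp) (h.nby _ hq) hadj
  simp at this; omega

theorem case3a (hX : Ctx G f c δ) (h : Pair G f δ x y X) {z w : V} {Y : Finset V} (h' : Pair G f δ z w Y)
    (hd : Disjoint ({x, y} : Finset V) {z, w}) : 4 * δ ≤ c + 8 := by
  have hL := hX.lg
  have hxz : x ≠ z := fun e => (Finset.disjoint_left.1 hd (by simp : x ∈ _)) (by simp [e])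
  have hyz : y ≠ z := fun e => (Finset.disjoint_left.1 hd (by simp : y ∈ _)) (by simp [e])
  have hxnz : ¬ G.Adj x z := by
    intro hh
    rcases h.clx z hh with e | e
    · exact hyz e.symm
    · obtain ⟨i, hi⟩ := h.inC z e
      exact h'.ofx i hi
  -- an element of `X` whose successor lies in `Y`
  obtain ⟨p, hp, hpY⟩ : ∃ p, f p ∈ X ∧ f (p+1) ∈ Y := by
    by_contra hcon
    push Not at hcon
    have hd2 : Disjoint (Sx f X 1) {x, z} := by
      rw [Finset.disjoint_left]; intro v hv hv'
      obtain ⟨p, _, rfl⟩ := (h.mem_Sx hL).1 hv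
      simp at hv'
      rcases hv' with e | e
      · exact h.ofx _ e
      · exact h'.ofx _ e
    have hxS : ∀ u ∈ Sx f X 1, ¬ G.Adj x u := by
      intro u hu hh
      obtain ⟨p, hp, rfl⟩ := (h.mem_Sx hL).1 hu
      rcases h.clx _ hh with e | e
      · exact h.ofy _ e
      · exact h.sp1 hL hp e
    have hzS : ∀ u ∈ Sx f X 1, ¬ G.Adj z u := by
      intro u hu hh
      obtain ⟨p, hp, rfl⟩ := (h.mem_Sx hL).1 hu
      rcases h'.clx _ hh with e | e
      · exact h'.ofy _ e
      · exact hcon p hp e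
    have hSS : ∀ u ∈ Sx f X 1, ∀ v ∈ Sx f X 1, ¬ G.Adj u v := by
      intro u hu v hv
      obtain ⟨p, hp, rfl⟩ := (h.mem_Sx hL).1 hu
      obtain ⟨q, hq, rfl⟩ := (h.mem_Sx hL).1 hv
      by_cases hne : f p = f q
      · rw [hL.cyc.shift_eq 1 hne]; exact G.irrefl
      · exact h.cross hL hp hq hne le_rfl (by omega)
    have := hX.al (Sx f X 1 ∪ {x, z}) (by
      intro u hu v hv
      rw [Finset.mem_union, Finset.mem_insert, Finset.mem_singleton] at hu hv
      rcases hu with hu | rfl | rfl <;> rcases hv with hv | rfl | rfl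
      · exact hSS u hu v hv
      · exact fun e => hxS u hu e.symm
      · exact fun e => hzS u hu e.symm
      · exact hxS v hv
      · exact G.irrefl
      · exact hxnz
      · exact hzS v hv
      · exact fun e => hxnz e.symm
      · exact G.irrefl)
    rw [Finset.card_union_of_disjoint hd2, card_Sx hL h.inC, Finset.card_pair hxz] at this
    have := h.card
    omega
  have hc3 := hL.cyc.three
  -- claims
  have cl1 : ∀ q, f q ∈ X → f q ≠ f p → ∀ j : ℤ, 1 ≤ j → j ≤ 3 → f (q + j) ∉ Y := by
    intro q hq hne j h1 h3 hY
    obtain ⟨k, hk3, hkc, he⟩ := h.far hL hp hq hne.symm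
    rw [← hL.cyc.shift_eq j he] at hY
    rw [← he] at hq
    have hlt : k + j < c := by
      by_contra hge
      have e : p + k + j = p + c := by omega
      rw [e, hL.cyc.per] at hY
      exact h'.sp1 hL hY hpY
    have := hL.cross h.pth h.off h'.pth h'.off hd (p0 := p) (p1 := p+1) (p2 := p + k) (p3 := p + k + j) (by omega)
      (by omega) (by omega) (by omega) (h.nbx _ hp) (h.nby _ hq) (h'.nbx _ hpY) (h'.nby _ hY)
    simp at this; omega
  have cl2 : ∀ q, f q ∈ X → ∀ j : ℤ, 2 ≤ j → j ≤ 3 → f (q + j) ∉ Y := by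
    intro q hq j h2 h3 hY
    by_cases hne : f q = f p
    · rw [hL.cyc.shift_eq j hne] at hY
      have := h'.sp hL (p := p + 1) (k := j - 1) (by omega) (by omega) hpY (by
        rw [show p + 1 + (j - 1) = p + j by ring]; exact hY)
      omega
    · exact cl1 q hq hne j (by omega) h3 hY
  let Y1 := (Y \ X).erase (f (p+1))
  let Z := Sx f (X ∩ Y) (-1)
  have hZ : ∀ v ∈ Z, ∃ r, f r ∈ X ∧ f r ∈ Y ∧ v = f (r - 1) := by
    intro v hv
    obtain ⟨u, hu, rfl⟩ := Finset.mem_image.1 hv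
    obtain ⟨i, rfl⟩ := h.inC u (Finset.mem_inter.1 hu).1
    exact ⟨i, (Finset.mem_inter.1 hu).1, (Finset.mem_inter.1 hu).2, hL.cyc.sh_eq (-1) i⟩
  have hZc : Z.card = (X ∩ Y).card := card_Sx hL (fun u hu => h.inC u (Finset.mem_inter.1 hu).1) _
  have hY1c : Y.card ≤ Y1.card + (X ∩ Y).card + 1 := by
    have e1 := Finset.card_sdiff_add_card_inter Y X
    rw [Finset.inter_comm] at e1
    have := Finset.pred_card_le_card_erase (s := Y \ X) (a := f (p+1))
    have h2 : (Y \ X).card - 1 ≤ Y1.card := this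
    omega
  set T := (X ∪ Sx f X 1) ∪ Sx f X 2 with hT
  have d1 : Disjoint T Y1 := by
    rw [Finset.disjoint_left]; intro v hv hv'
    rw [Finset.mem_erase, Finset.mem_sdiff] at hv'
    simp only [hT, Finset.mem_union, h.mem_Sx hL] at hv
    rcases hv with (hv | ⟨q, hq, rfl⟩) | ⟨q, hq, rfl⟩
    · exact hv'.2.2 hv
    · by_cases hne : f q = f p
      · exact hv'.1 (hL.cyc.shift_eq 1 hne)
      · exact cl1 q hq hne 1 (by omega) (by omega) hv'.2.1
    · exact cl2 q hq 2 (by omega) (by omega) hv'.2.1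
  have d2 : Disjoint (T ∪ Y1) Z := by
    rw [Finset.disjoint_left]; intro v hv hv'
    obtain ⟨r, hrX, hrY, rfl⟩ := hZ v hv'
    have hr : ∀ q j : ℤ, f (r - 1) = f (q + j) → f r = f (q + (j + 1)) := by
      intro q j e
      have := hL.cyc.shift_eq 1 e
      rw [show r - 1 + 1 = r by ring] at this
      rw [this]; congr 1; ring
    simp only [hT, Finset.mem_union, h.mem_Sx hL] at hv
    rcases hv with ((hv | ⟨q, hq, e⟩) | ⟨q, hq, e⟩) | hv
    · apply h.sp1 hL hv; rw [show r - 1 + 1 = r by ring]; exact hrX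
    · apply h.sp2 hL hq; rw [show (2 : ℤ) = 1 + 1 by ring, ← hr q 1 e]; exact hrX
    · apply cl2 q hq 3 (by omega) (by omega); rw [show (3 : ℤ) = 2 + 1 by ring, ← hr q 2 e]; exact hrY
    · rw [Finset.mem_erase, Finset.mem_sdiff] at hv
      apply h'.sp1 hL hv.2.1; rw [show r - 1 + 1 = r by ring]; exact hrY
  have hsub : (T ∪ Y1) ∪ Z ⊆ Cs f c := by
    refine Finset.union_subset (Finset.union_subset (h.sub3 hL) ?_) ?_
    · intro v hv
      rw [Finset.mem_erase, Finset.mem_sdiff] at hv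
      rw [hL.cyc.mem_Cs]; exact h'.inC v hv.2.1
    · intro v hv
      obtain ⟨r, _, _, rfl⟩ := hZ v hv
      rw [hL.cyc.mem_Cs]; exact ⟨_, rfl⟩
  have hfin := Finset.card_le_card hsub
  rw [Finset.card_union_of_disjoint d2, Finset.card_union_of_disjoint d1, h.card3 hL, hL.cyc.card_Cs, hZc] at hfin
  have := h.card
  have := h'.card
  omega

end
end Nik

namespace Nik
variable {V : Type*} [Fintype V] [DecidableEq V] {G : SimpleGraph V}

section
variable {f : ℤ → V} {c δ : ℕ} {x y : V} {X : Finset V}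

def Up (f : ℤ → V) (X : Finset V) (v : V) : Prop := ∃ p, f p ∈ X ∧ v = f (p + 1)
def Dn (f : ℤ → V) (X : Finset V) (v : V) : Prop := ∃ p, f p ∈ X ∧ v = f (p - 1)

theorem Pair.upFact (h : Pair G f δ x y X) (hL : Lg G f c) (hall : ∀ v, (∃ i, f i = v) ∨ v = x ∨ v = y) :
    ∃ R : Finset V, R.card + 3 * X.card = c ∧ (∀ w ∈ R, w ∉ X) ∧ (∀ w ∈ R, ¬ Up f X w) ∧ (∀ w ∈ R, ∃ i, f i = w) ∧
      ∀ v, Up f X v → (¬ G.Adj v x ∧ ¬ G.Adj v y) ∧ ∃ v', ∀ w, G.Adj v w → w ∈ X ∨ w ∈ R ∨ w = v' := by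
  set T := (X ∪ Sx f X 1) ∪ Sx f X 2 with hT
  have hmem : ∀ v, v ∈ T ↔ (v ∈ X ∨ (∃ p, f p ∈ X ∧ v = f (p + 1))) ∨ ∃ p, f p ∈ X ∧ v = f (p + 2) := by
    intro v
    simp only [hT, Finset.mem_union, h.mem_Sx hL]
  refine ⟨Cs f c \ T, ?_, ?_, ?_, ?_, ?_⟩
  · rw [Finset.card_sdiff_of_subset (h.sub3 hL), h.card3 hL, hL.cyc.card_Cs]
    have := Finset.card_le_card (h.sub3 hL)
    rw [h.card3 hL, hL.cyc.card_Cs] at this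
    omega
  · intro w hw hwX
    exact (Finset.mem_sdiff.1 hw).2 ((hmem w).2 (Or.inl (Or.inl hwX)))
  · intro w hw hwX
    exact (Finset.mem_sdiff.1 hw).2 ((hmem w).2 (Or.inl (Or.inr hwX)))
  · intro w hw
    exact hL.cyc.mem_Cs.1 (Finset.mem_sdiff.1 hw).1
  · rintro v ⟨p, hp, rfl⟩
    have hx : ¬ G.Adj (f (p+1)) x := by
      intro hh
      rcases h.clx _ hh.symm with e | e
      · exact h.ofy _ e
      · exact h.sp1 hL hp e
    have hy : ¬ G.Adj (f (p+1)) y := by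
      intro hh
      rcases h.cly _ hh.symm with e | e
      · exact h.ofx _ e
      · exact h.sp1 hL hp e
    refine ⟨⟨hx, hy⟩, f (p + 2), ?_⟩
    intro w hw
    have hwC : ∃ i, f i = w := by
      rcases hall w with e | rfl | rfl
      · exact e
      · exact absurd hw hx
      · exact absurd hw hy
    by_cases hwT : w ∈ T
    · rcases (hmem w).1 hwT with (e | ⟨q, hq, rfl⟩) | ⟨q, hq, rfl⟩
      · exact Or.inl e
      · exfalso
        by_cases hne : f p = f q
        · rw [hL.cyc.shift_eq 1 hne] at hw; exact G.irrefl hw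
        · exact h.cross hL hp hq hne le_rfl (by omega) hw
      · by_cases hne : f p = f q
        · exact Or.inr (Or.inr (hL.cyc.shift_eq 2 hne.symm))
        · exact absurd hw (h.cross hL hp hq hne (by omega) le_rfl)
    · exact Or.inr (Or.inl (Finset.mem_sdiff.2 ⟨hL.cyc.mem_Cs.2 hwC, hwT⟩))

theorem Up_neg (v : V) : Up (fun i => f (-i)) X v ↔ Dn f X v := by
  constructor
  · rintro ⟨p, hp, e⟩
    exact ⟨-p, hp, by rw [e]; show f (-(p + 1)) = f (-p - 1); congr 1; ring⟩
  · rintro ⟨p, hp, e⟩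
    exact ⟨-p, by simpa using hp, by rw [e]; congr 1; ring⟩

theorem Pair.dnFact (h : Pair G f δ x y X) (hL : Lg G f c) (hall : ∀ v, (∃ i, f i = v) ∨ v = x ∨ v = y) :
    ∃ R : Finset V, R.card + 3 * X.card = c ∧ (∀ w ∈ R, w ∉ X) ∧ (∀ w ∈ R, ¬ Dn f X w) ∧ (∀ w ∈ R, ∃ i, f i = w) ∧
      ∀ v, Dn f X v → (¬ G.Adj v x ∧ ¬ G.Adj v y) ∧ ∃ v', ∀ w, G.Adj v w → w ∈ X ∨ w ∈ R ∨ w = v' := by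
  obtain ⟨R, h1, h2, h3, h4, h5⟩ := h.neg.upFact hL.neg (by
    intro v
    rcases hall v with ⟨i, hi⟩ | e
    · exact Or.inl ⟨-i, by simpa using hi⟩
    · exact Or.inr e)
  simp only [Up_neg] at h3 h5
  refine ⟨R, h1, h2, h3, ?_, h5⟩
  intro w hw
  obtain ⟨i, hi⟩ := h4 w hw
  exact ⟨-i, hi⟩

theorem Pair.midFact (h : Pair G f δ x y X) (hL : Lg G f c) :
    ∃ R : Finset V, R.card + 3 * X.card = c ∧ ∀ w, (∃ i, f i = w) → w ∉ X → ¬ Up f X w → ¬ Dn f X w → w ∈ R := by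
  have hd1 := (h.disj3 hL).1
  have hd2 : Disjoint (X ∪ Sx f X 1) (Sx f X (-1)) := by
    rw [Finset.disjoint_left]; intro v hv hv'
    obtain ⟨p, hp, rfl⟩ := (h.mem_Sx hL).1 hv'
    rcases Finset.mem_union.1 hv with hv | hv
    · apply h.sp1 hL hv; rw [show p + -1 + 1 = p by ring]; exact hp
    · obtain ⟨q, hq, e⟩ := (h.mem_Sx hL).1 hv
      have e2 := hL.cyc.shift_eq 1 e
      rw [show p + -1 + 1 = p by ring, show q + 1 + 1 = q + 2 by ring] at e2
      exact h.sp2 hL hq (e2 ▸ hp)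
  have hc : ((X ∪ Sx f X 1) ∪ Sx f X (-1)).card = 3 * X.card := by
    rw [Finset.card_union_of_disjoint hd2, Finset.card_union_of_disjoint hd1, card_Sx hL h.inC, card_Sx hL h.inC]
    ring
  have hsub : ((X ∪ Sx f X 1) ∪ Sx f X (-1)) ⊆ Cs f c := by
    intro v hv
    rw [hL.cyc.mem_Cs]
    simp only [Finset.mem_union, h.mem_Sx hL] at hv
    rcases hv with (hv | ⟨p, _, hp⟩) | ⟨p, _, hp⟩
    · exact h.inC v hv
    · exact ⟨_, hp.symm⟩
    · exact ⟨_, hp.symm⟩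
  refine ⟨Cs f c \ ((X ∪ Sx f X 1) ∪ Sx f X (-1)), ?_, ?_⟩
  · rw [Finset.card_sdiff_of_subset hsub, hc, hL.cyc.card_Cs]
    have := Finset.card_le_card hsub
    rw [hc, hL.cyc.card_Cs] at this
    omega
  · intro w hw h1 h2 h3
    rw [Finset.mem_sdiff, hL.cyc.mem_Cs]
    refine ⟨hw, ?_⟩
    simp only [Finset.mem_union, h.mem_Sx hL]
    rintro ((e | e) | e)
    · exact h1 e
    · exact h2 e
    · obtain ⟨p, hp, e⟩ := e; exact h3 ⟨p, hp, e⟩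

structure Sep (G : SimpleGraph V) (S A B : Finset V) : Prop where
  cov : ∀ v, v ∈ S ∨ v ∈ A ∨ v ∈ B
  SA : Disjoint S A
  SB : Disjoint S B
  AB : Disjoint A B
  nA : A.Nonempty
  nB : B.Nonempty
  no : ∀ a ∈ A, ∀ b ∈ B, ¬ G.Adj a b

theorem Sep.symm {S A B : Finset V} (h : Sep G S A B) : Sep G S B A :=
  ⟨fun v => by have := h.cov v; tauto, h.SB, h.SA, h.AB.symm, h.nB, h.nA, fun b hb a ha e => h.no a ha b hb e.symm⟩

theorem Sep.nb {S A B : Finset V} (h : Sep G S A B) {b w : V} (hb : b ∈ B) (hw : G.Adj b w) : w ∈ S ∨ w ∈ B := by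
  rcases h.cov w with e | e | e
  · exact Or.inl e
  · exact absurd hw.symm (h.no w e b hb)
  · exact Or.inr e

/-- degree of a vertex of `B` is at most `|S| + |B| - 1` -/
theorem Sep.degB {S A B : Finset V} (hX : Ctx G f c δ) (h : Sep G S A B) : δ + 1 ≤ S.card + B.card := by
  obtain ⟨v, hv⟩ := h.nB
  have := hX.dg v (S ∪ B.erase v) (by
    intro w hw
    rw [Finset.mem_union, Finset.mem_erase]
    rcases h.nb hv hw with e | e
    · exact Or.inl e
    · exact Or.inr ⟨hw.ne', e⟩)
  have h1 := Finset.card_union_le S (B.erase v)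
  rw [Finset.card_erase_of_mem hv] at h1
  have := Finset.card_pos.2 h.nB
  omega

/-- one of the two outer vertices lies in `A` -/
theorem sepA (hX : Ctx G f c δ) (h : Pair G f δ x y X) (hall : ∀ v, (∃ i, f i = v) ∨ v = x ∨ v = y)
    {S A B : Finset V} (hS : Sep G S A B) {κ : ℕ} (hκ : 4 ≤ κ) (hSκ : S.card ≤ κ) (hz : x ∈ A ∨ y ∈ A) :
    4 * δ ≤ c + 2 * κ := by
  have hL := hX.lg
  have hcard := h.card
  have hXB : ∀ b ∈ B, b ∉ X := by
    intro b hb hbX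
    rcases hz with hz | hz
    · exact hS.no _ hz b hb (h.nbx b hbX).symm
    · exact hS.no _ hz b hb (h.nby b hbX).symm
  have hxB : x ∉ B := by
    intro hx
    rcases hz with hz | hz
    · exact Finset.disjoint_left.1 hS.AB hz hx
    · exact hS.no _ hz _ hx h.xy.symm
  have hyB : y ∉ B := by
    intro hy
    rcases hz with hz | hz
    · exact hS.no _ hz _ hy h.xy
    · exact Finset.disjoint_left.1 hS.AB hz hy
  have hBC : ∀ b ∈ B, ∃ i, f i = b := by
    intro b hb
    rcases hall b with e | rfl | rfl
    · exact e
    · exact absurd hb hxB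
    · exact absurd hb hyB
  have key : ∀ R : Finset V, R.card + 3 * X.card = c → ∀ b ∈ B, (∃ v', ∀ w, G.Adj b w → w ∈ X ∨ w ∈ R ∨ w = v') →
      4 * δ ≤ c + 2 * κ := by
    rintro R hR b hb ⟨v', hv'⟩
    have := hX.dg b (S ∪ (insert v' R)) (by
      intro w hw
      rw [Finset.mem_union, Finset.mem_insert]
      rcases hS.nb hb hw with e | e
      · exact Or.inl e
      · rcases hv' w hw with e' | e' | e'
        · exact absurd e' (hXB w e)
        · exact Or.inr (Or.inr e')
        · exact Or.inr (Or.inl e'))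
    have h1 := Finset.card_union_le S (insert v' R)
    have h2 := Finset.card_insert_le v' R
    omega
  obtain ⟨R0, hR0, _, _, _, hR0'⟩ := h.upFact hL hall
  obtain ⟨R2, hR2, _, _, _, hR2'⟩ := h.dnFact hL hall
  obtain ⟨R1, hR1, hR1'⟩ := h.midFact hL
  by_cases hU : ∃ b ∈ B, Up f X b
  · obtain ⟨b, hb, hbU⟩ := hU
    exact key R0 hR0 b hb (hR0' b hbU).2
  by_cases hD : ∃ b ∈ B, Dn f X b
  · obtain ⟨b, hb, hbU⟩ := hD
    exact key R2 hR2 b hb (hR2' b hbU).2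
  push Not at hU hD
  have hB : B ⊆ R1 := fun b hb => hR1' b (hBC b hb) (hXB b hb) (hU b hb) (hD b hb)
  have h1 := Finset.card_le_card hB
  have h2 := hS.degB hX
  omega

/-- no ends in `B` -/
theorem noend (hX : Ctx G f c δ) (h : Pair G f δ x y X) (hall : ∀ v, (∃ i, f i = v) ∨ v = x ∨ v = y)
    {S A B : Finset V} (hS : Sep G S A B) {κ : ℕ} (hSκ : S.card ≤ κ) (hx : x ∈ S) (hy : y ∈ S)
    (hU : ∀ b ∈ B, ¬ Up f X b) (hD : ∀ b ∈ B, ¬ Dn f X b) : 4 * δ ≤ c + 2 * κ := by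
  have hL := hX.lg
  have hcard := h.card
  obtain ⟨R1, hR1, hR1'⟩ := h.midFact hL
  have hBC : ∀ b ∈ B, ∃ i, f i = b := by
    intro b hb
    rcases hall b with e | rfl | rfl
    · exact e
    · exact absurd hb (Finset.disjoint_left.1 hS.SB hx)
    · exact absurd hb (Finset.disjoint_left.1 hS.SB hy)
  have e0 := Finset.card_sdiff_add_card_inter B X
  have e1 : (B \ X).card ≤ R1.card := by
    apply Finset.card_le_card
    intro b hb
    rw [Finset.mem_sdiff] at hb
    exact hR1' b (hBC b hb.1) hb.2 (hU b hb.1) (hD b hb.1)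
  have e2 : (B ∩ X).card ≤ ((S.erase x).erase y).card := by
    rw [← card_Sx hL (Y := B ∩ X) (fun u hu => h.inC u (Finset.mem_inter.1 hu).2) 1]
    apply Finset.card_le_card
    intro v hv
    obtain ⟨u, hu, rfl⟩ := Finset.mem_image.1 hv
    rw [Finset.mem_inter] at hu
    obtain ⟨i, rfl⟩ := h.inC u hu.2
    rw [hL.cyc.sh_eq, Finset.mem_erase, Finset.mem_erase]
    refine ⟨h.ofy _, h.ofx _, ?_⟩
    rcases hS.nb hu.1 (hL.cyc.adj i) with e | e
    · exact e
    · exact absurd ⟨i, hu.2, rfl⟩ (hU _ e)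
  have hys : y ∈ S.erase x := Finset.mem_erase.2 ⟨h.xy.ne', hy⟩
  have e3 := Finset.card_pos.2 ⟨y, hys⟩
  rw [Finset.card_erase_of_mem hys] at e2
  rw [Finset.card_erase_of_mem hx] at e2 e3
  have h2 := hS.degB hX
  omega

/-- two ends on different sides -/
theorem twoends (hX : Ctx G f c δ) (h : Pair G f δ x y X) 
    {S A B R : Finset V} (hS : Sep G S A B) {κ : ℕ} (hSκ : S.card ≤ κ) (hx : x ∈ S) (hy : y ∈ S)
    (hR : R.card + 3 * X.card = c) {a b a' b' : V} (ha : a ∈ A) (hb : b ∈ B)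
    (hax : ¬ G.Adj a x ∧ ¬ G.Adj a y) (hbx : ¬ G.Adj b x ∧ ¬ G.Adj b y)
    (haA : ∀ w ∈ A, G.Adj a w → w ∈ X ∨ w ∈ R ∨ w = a')
    (hbB : ∀ w ∈ B, G.Adj b w → w ∈ X ∨ w ∈ R ∨ w = b') : 4 * δ ≤ c + 2 * κ := by
  have hcard := h.card
  have gen : ∀ {A B : Finset V}, Sep G S A B → ∀ b ∈ B, (¬ G.Adj b x ∧ ¬ G.Adj b y) → ∀ b',
      (∀ w ∈ B, G.Adj b w → w ∈ X ∨ w ∈ R ∨ w = b') → δ + 1 ≤ S.card + (X ∩ B).card + (R ∩ B).card := by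
    intro A B hS b hb hbx b' hbB
    have := hX.dg b (((S.erase x).erase y) ∪ ((X ∩ B) ∪ (insert b' (R ∩ B)))) (by
      intro w hw
      simp only [Finset.mem_union, Finset.mem_insert, Finset.mem_inter, Finset.mem_erase]
      rcases hS.nb hb hw with e | e
      · exact Or.inl ⟨fun e => hbx.2 (e ▸ hw), fun e => hbx.1 (e ▸ hw), e⟩
      · have := hbB w e hw
        tauto)
    have h1 := Finset.card_union_le ((S.erase x).erase y) ((X ∩ B) ∪ (insert b' (R ∩ B)))
    have h2 := Finset.card_union_le (X ∩ B) (insert b' (R ∩ B))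
    have h3 := Finset.card_insert_le b' (R ∩ B)
    have hys : y ∈ S.erase x := Finset.mem_erase.2 ⟨h.xy.ne', hy⟩
    have e3 := Finset.card_pos.2 ⟨y, hys⟩
    rw [Finset.card_erase_of_mem hys] at h1
    rw [Finset.card_erase_of_mem hx] at h1 e3
    omega
  have g1 := gen hS b hb hbx b' hbB
  have g2 := gen hS.symm a ha hax a' haA
  have dis : ∀ Z : Finset V, (Z ∩ A).card + (Z ∩ B).card ≤ Z.card := by
    intro Z
    rw [← Finset.card_union_of_disjoint]
    · exact Finset.card_le_card (Finset.union_subset Finset.inter_subset_left Finset.inter_subset_left)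
    · exact hS.AB.mono Finset.inter_subset_right Finset.inter_subset_right
  have d1 := dis X
  have d2 := dis R
  omega

/-- an up-end in `A`, a down-end in `B`, nothing else -/
theorem mixends (hX : Ctx G f c δ) (h : Pair G f δ x y X) (hall : ∀ v, (∃ i, f i = v) ∨ v = x ∨ v = y)
    {S A B : Finset V} (hS : Sep G S A B) {κ : ℕ} (hSκ : S.card ≤ κ) (hx : x ∈ S) (hy : y ∈ S)
    (hUA : ∃ a ∈ A, Up f X a) (hDB : ∃ b ∈ B, Dn f X b)
    (hUB : ∀ b ∈ B, ¬ Up f X b) (hDA : ∀ a ∈ A, ¬ Dn f X a) : 4 * δ ≤ c + 2 * κ := by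
  have hL := hX.lg
  obtain ⟨R0, hR0, _, hu0, hc0, hR0'⟩ := h.upFact hL hall
  obtain ⟨R2, hR2, _, hd2, hc2, hR2'⟩ := h.dnFact hL hall
  obtain ⟨R1, hR1, hR1'⟩ := h.midFact hL
  obtain ⟨a, ha, haU⟩ := hUA
  obtain ⟨b, hb, hbD⟩ := hDB
  obtain ⟨hax, a', ha'⟩ := hR0' a haU
  obtain ⟨hbx, b', hb'⟩ := hR2' b hbD
  refine twoends hX h hS hSκ hx hy hR1 ha hb hax hbx (a' := a') (b' := b') ?_ ?_
  · intro w hw haw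
    by_cases hwX : w ∈ X
    · exact Or.inl hwX
    rcases ha' w haw with e | e | e
    · exact Or.inl e
    · exact Or.inr (Or.inl (hR1' w (hc0 w e) hwX (hu0 w e) (hDA w hw)))
    · exact Or.inr (Or.inr e)
  · intro w hw haw
    by_cases hwX : w ∈ X
    · exact Or.inl hwX
    rcases hb' w haw with e | e | e
    · exact Or.inl e
    · exact Or.inr (Or.inl (hR1' w (hc2 w e) hwX (hUB w hw) (hd2 w e)))
    · exact Or.inr (Or.inr e)

theorem case3b (hX : Ctx G f c δ) (h : Pair G f δ x y X) (hall : ∀ v, (∃ i, f i = v) ∨ v = x ∨ v = y)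
    {S A B : Finset V} (hS : Sep G S A B) {κ : ℕ} (hκ : 4 ≤ κ) (hSκ : S.card ≤ κ) : 4 * δ ≤ c + 2 * κ := by
  have hL := hX.lg
  by_cases hA : x ∈ A ∨ y ∈ A
  · exact sepA hX h hall hS hκ hSκ hA
  by_cases hB : x ∈ B ∨ y ∈ B
  · exact sepA hX h hall hS.symm hκ hSκ hB
  have hx : x ∈ S := by have := hS.cov x; tauto
  have hy : y ∈ S := by have := hS.cov y; tauto
  obtain ⟨R0, hR0, _, hu0, hc0, hR0'⟩ := h.upFact hL hall
  obtain ⟨R2, hR2, _, hd2, hc2, hR2'⟩ := h.dnFact hL hall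
  by_cases hUU : (∃ a ∈ A, Up f X a) ∧ ∃ b ∈ B, Up f X b
  · obtain ⟨⟨a, ha, haU⟩, b, hb, hbU⟩ := hUU
    obtain ⟨hax, a', ha'⟩ := hR0' a haU
    obtain ⟨hbx, b', hb'⟩ := hR0' b hbU
    exact twoends hX h hS hSκ hx hy hR0 ha hb hax hbx (fun w _ => ha' w) (fun w _ => hb' w)
  by_cases hDD : (∃ a ∈ A, Dn f X a) ∧ ∃ b ∈ B, Dn f X b
  · obtain ⟨⟨a, ha, haU⟩, b, hb, hbU⟩ := hDD
    obtain ⟨hax, a', ha'⟩ := hR2' a haU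
    obtain ⟨hbx, b', hb'⟩ := hR2' b hbU
    exact twoends hX h hS hSκ hx hy hR2 ha hb hax hbx (fun w _ => ha' w) (fun w _ => hb' w)
  by_cases hUA : ∃ a ∈ A, Up f X a
  · have hUB : ∀ b ∈ B, ¬ Up f X b := fun b hb e => hUU ⟨hUA, b, hb, e⟩
    by_cases hDB : ∃ b ∈ B, Dn f X b
    · exact mixends hX h hall hS hSκ hx hy hUA hDB hUB (fun a ha e => hDD ⟨⟨a, ha, e⟩, hDB⟩)
    · push Not at hDB
      exact noend hX h hall hS hSκ hx hy hUB hDB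
  · by_cases hDA : ∃ a ∈ A, Dn f X a
    · have hDB : ∀ b ∈ B, ¬ Dn f X b := fun b hb e => hDD ⟨hDA, b, hb, e⟩
      by_cases hUB : ∃ b ∈ B, Up f X b
      · exact mixends hX h hall hS.symm hSκ hx hy hUB hDA (by push Not at hUA; exact hUA) hDB
      · push Not at hUB
        exact noend hX h hall hS hSκ hx hy hUB hDB
    · push Not at hUA hDA
      exact noend hX h hall hS.symm hSκ hx hy hUA hDA
end
end Nik

namespace Nik
variable {V : Type*} [Fintype V] [DecidableEq V] {G : SimpleGraph V}

theorem closed_reach {W : Type*} {H : SimpleGraph W} (P : W → Prop) (hP : ∀ a b, P a → H.Adj a b → P b)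
    {a b : W} (h : H.Reachable a b) (ha : P a) : P b := by
  obtain ⟨w⟩ := h
  induction w with
  | nil => exact ha
  | cons hadj p ih => exact ih (hP _ _ ha hadj)

theorem kc_of_conn {k : ℕ} (h : KConnected G k) : KC G k := by
  intro S F hS ⟨a, ha⟩ hd ⟨v, hvF, hvS⟩
  by_contra hcon
  push Not at hcon
  have hc := (h.2 S hS).preconnected
  have haS : a ∉ S := fun h => Finset.disjoint_left.1 hd ha h
  have hr := hc ⟨a, by simpa using haS⟩ ⟨v, by simpa using hvS⟩
  have := closed_reach (fun u => u.1 ∈ F) (fun p q hp hpq => by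
    by_contra hq
    have hqS : q.1 ∉ S := fun h => q.2 (Finset.mem_coe.2 h)
    exact hcon p.1 hp q.1 hq hqS hpq) hr ha
  exact hvF this

theorem sep_of_not {k : ℕ} (h : ¬ KConnected G (k+1)) (hc : k + 1 < Fintype.card V) :
    ∃ S A B, Sep G S A B ∧ S.card ≤ k := by
  classical
  unfold KConnected at h
  push Not at h
  obtain ⟨S, hS, hn⟩ := h hc
  have hex : ∃ v, v ∉ S := by
    by_contra hall
    push Not at hall
    have : S = Finset.univ := by ext v; simp [hall v]
    rw [this, Finset.card_univ] at hS; omega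
  obtain ⟨v0, hv0⟩ := hex
  have hnp : ¬ (G.induce ((↑S : Set V)ᶜ)).Preconnected := fun hp =>
    hn ((SimpleGraph.connected_iff _).2 ⟨hp, ⟨⟨v0, by simpa using hv0⟩⟩⟩)
  unfold SimpleGraph.Preconnected at hnp
  push Not at hnp
  obtain ⟨u, v, huv⟩ := hnp
  set A : Finset V := Finset.univ.filter (fun w => ∃ hw : w ∈ ((↑S : Set V)ᶜ), (G.induce ((↑S : Set V)ᶜ)).Reachable u ⟨w, hw⟩) with hA
  have mA : ∀ w, w ∈ A ↔ ∃ hw : w ∈ ((↑S : Set V)ᶜ), (G.induce ((↑S : Set V)ᶜ)).Reachable u ⟨w, hw⟩ := by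
    intro w; simp [hA]
  set B : Finset V := Finset.univ.filter (fun w => w ∉ S ∧ w ∉ A) with hB
  have mB : ∀ w, w ∈ B ↔ w ∉ S ∧ w ∉ A := by intro w; simp [hB]
  refine ⟨S, A, B, ⟨?_, ?_, ?_, ?_, ?_, ?_, ?_⟩, by omega⟩
  · intro w
    rw [mB]; tauto
  · rw [Finset.disjoint_left]; intro w hw hwA
    obtain ⟨h1, _⟩ := (mA w).1 hwA
    exact h1 (by simpa using hw)
  · rw [Finset.disjoint_left]; intro w hw hwB
    exact ((mB w).1 hwB).1 hw
  · rw [Finset.disjoint_left]; intro w hw hwB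
    exact ((mB w).1 hwB).2 hw
  · exact ⟨u.1, (mA _).2 ⟨u.2, Reachable.refl _⟩⟩
  · refine ⟨v.1, (mB _).2 ⟨fun h => v.2 (Finset.mem_coe.2 h), fun hvA => ?_⟩⟩
    obtain ⟨_, h2⟩ := (mA _).1 hvA
    exact huv h2
  · intro a ha b hb hab
    obtain ⟨h1, h2⟩ := (mA a).1 ha
    obtain ⟨h3, h4⟩ := (mB b).1 hb
    have h3' : b ∈ ((↑S : Set V)ᶜ) := by simpa using h3
    refine h4 ((mA b).2 ⟨h3', h2.trans (Adj.reachable ?_)⟩)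
    exact hab

theorem cyc_cons {u v : V} (h : G.Adj u v) (p : G.Walk v u) (hp : p.IsPath) (h2 : 2 ≤ p.length) :
    (Walk.cons h p).IsCycle := by
  rw [Walk.isCycle_iff_isPath_tail_and_le_length]
  simp only [Walk.getVert_cons_succ, Walk.tail_cons, Walk.isPath_copy, Walk.length_cons]
  exact ⟨hp, by omega⟩

theorem cl_le_circ {l : List V} (h : IsCl G l) : l.length ≤ circumference G := by
  obtain ⟨W, s, t, ⟨h1, h2, h3, h4, h5⟩, hadj, hl⟩ := h
  unfold circumference
  refine le_csSup ⟨Fintype.card V, ?_⟩ ?_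
  · rintro n ⟨v, w, hw, rfl⟩
    have := hw.support_nodup.length_le_card
    simpa using this
  · have hne : l ≠ [] := by rintro rfl; simp at hl
    have hs : l.head hne = s := by
      rw [List.head?_eq_some_head hne] at h3; simpa using h3
    have ht : l.getLast hne = t := by
      rw [List.getLast?_eq_some_getLast hne] at h4; simpa using h4
    refine ⟨_, Walk.cons (by rw [hs, ht]; exact hadj : G.Adj (l.getLast hne) (l.head hne)) (Walk.ofSupport l hne h1), ?_, ?_⟩
    · refine cyc_cons _ _ ?_ ?_
      · rw [Walk.isPath_def, Walk.support_ofSupport]; exact h2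
      · simp; omega
    · simp; omega

theorem exists_cl (hc : 4 < Fintype.card V) (hk : KC G 4) : ∃ l, IsCl G l := by
  have hdeg : ∀ v, ∀ T : Finset V, (∀ w, G.Adj v w → w ∈ T) → 4 ≤ T.card := by
    intro v T hT
    by_contra hlt
    push Not at hlt
    have hins := Finset.card_insert_le v T
    have hex : ∃ u, u ∉ insert v T := by
      by_contra hall
      push Not at hall
      have : insert v T = Finset.univ := by ext v; simp only [hall v, Finset.mem_univ]
      rw [this, Finset.card_univ] at hins; omega
    obtain ⟨u, hu⟩ := hex
    rw [Finset.mem_insert, not_or] at hu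
    obtain ⟨a, ha, b, hb, hbS, hab⟩ := hk (T.erase v) {v} (lt_of_le_of_lt (Finset.card_erase_le) hlt) ⟨v, by simp⟩
      (by simp) ⟨u, by simpa using hu.1, fun h => hu.2 (Finset.mem_of_mem_erase h)⟩
    rw [Finset.mem_singleton] at ha hb
    subst ha
    exact hbS (Finset.mem_erase.2 ⟨hb, hT b hab⟩)
  have : Nonempty V := Fintype.card_pos_iff.1 (by omega)
  obtain ⟨x⟩ := this
  have : ∃ y, G.Adj x y := by
    by_contra hno
    push Not at hno
    have := hdeg x ∅ (fun w hw => absurd hw (hno w))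
    simp at this
  obtain ⟨y, hxy⟩ := this
  obtain ⟨l, hl, hlen⟩ := EG (G := G) 2 Finset.univ x y (by simp) (by simp) hxy.ne
    (by
      intro F _ hFn hxF hyF u
      obtain ⟨a, ha, b, hb, hbS, hab⟩ := hk ({u} \ F) F
        (lt_of_le_of_lt (Finset.card_le_card Finset.sdiff_subset) (by simp)) hFn Finset.disjoint_sdiff
        (by
          by_cases hux : x = u
          · exact ⟨y, hyF, by simp; intro h; exact absurd (hux.trans h.symm) hxy.ne⟩
          · exact ⟨x, hxF, by simp; intro h; exact absurd h hux⟩)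
      refine ⟨a, ha, b, by simp, hb, ?_, hab⟩
      rintro rfl
      exact hbS (by simp [hb]))
    (by
      intro F _ hxF hyF
      obtain ⟨a, ha, b, hb, hbS, hab⟩ := hk ∅ F (by simp) ⟨x, hxF⟩ (by simp) ⟨y, hyF, by simp⟩
      exact ⟨a, ha, b, by simp, hb, hab⟩)
    (by
      intro v _ _ _ T hT
      have := hdeg v T (fun w hw => hT w (by simp) hw)
      omega)
    (Or.inr (by rw [Finset.card_univ]; omega))
  exact ⟨l, _, x, y, hl, hxy.symm, hlen⟩

theorem exists_lg (h : ∃ l, IsCl G l) : ∃ f c, Lg G f c ∧ ∃ l, IsCl G l ∧ l.length = c := by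
  classical
  have hb : ∀ l, IsCl G l → l.length ≤ Fintype.card V := by
    rintro l ⟨W, s, t, hl, _⟩
    exact hl.2.1.length_le_card
  have hmax : ∃ l, IsCl G l ∧ ∀ l', IsCl G l' → l'.length ≤ l.length := by
    have hP : ∃ n, ∃ l, IsCl G l ∧ l.length = n := by
      obtain ⟨l, hl⟩ := h; exact ⟨_, l, hl, rfl⟩
    obtain ⟨l0, hl0⟩ := h
    have := Nat.findGreatest_spec (P := fun n => ∃ l, IsCl G l ∧ l.length = n) (hb l0 hl0) ⟨l0, hl0, rfl⟩
    obtain ⟨l, hl, hlen⟩ := this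
    refine ⟨l, hl, fun l' hl' => ?_⟩
    rw [hlen]
    exact Nat.le_findGreatest (hb l' hl') ⟨l', hl', rfl⟩
  obtain ⟨l, hl, hm⟩ := hmax
  have hl' := hl
  obtain ⟨W, s, t, ⟨h1, h2, h3, h4, h5⟩, hadj, h3l⟩ := hl'
  set c := l.length with hc
  have hcpos : (0:ℤ) < c := by omega
  have hlt : ∀ i : ℤ, (i % c).toNat < l.length := by
    intro i
    have := Int.emod_lt_of_pos i hcpos
    have := Int.emod_nonneg i hcpos.ne'
    omega
  refine ⟨fun i => l[(i % c).toNat]'(hlt i), c, ⟨⟨h3l, ?_, ?_⟩, hm⟩, l, hl, rfl⟩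
  · intro i
    have e1 := Int.emod_lt_of_pos i hcpos
    have e2 := Int.emod_nonneg i hcpos.ne'
    by_cases hi : i % c + 1 = c
    · have hz : (i + 1) % c = 0 := by
        rw [← Int.emod_add_emod, hi]; simp
      have hs : l[0]'(by omega) = s := by
        rw [List.head?_eq_getElem?, List.getElem?_eq_getElem (by omega)] at h3; simpa using h3
      have ht : l[l.length - 1]'(by omega) = t := by
        rw [List.getLast?_eq_getElem?, List.getElem?_eq_getElem (by omega)] at h4; simpa using h4
      have a1 : (i % c).toNat = l.length - 1 := by omega
      have a2 : ((i+1) % c).toNat = 0 := by omega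
      simp only [a1, a2, hs, ht]
      exact hadj
    · have hz : (i + 1) % c = i % c + 1 := by
        rw [← Int.emod_add_emod]
        exact Int.emod_eq_of_lt (by omega) (by omega)
      have a2 : ((i+1) % c).toNat = (i % c).toNat + 1 := by omega
      simp only [a2]
      exact List.isChain_iff_getElem.1 h1 _ (by have := hlt (i+1); omega)
  · intro i j
    rw [h2.getElem_inj_iff]
    have e2 := Int.emod_nonneg i hcpos.ne'
    have e3 := Int.emod_nonneg j hcpos.ne'
    rw [← Int.emod_eq_emod_iff_emod_sub_eq_zero.trans (Int.dvd_iff_emod_eq_zero).symm]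
    omega

theorem main {f : ℤ → V} {c δ κ : ℕ} (hX : Ctx G f c δ) (hκ : 4 ≤ κ) (hkc : KC G κ)
    (hn : ¬ KConnected G (κ+1)) : c = Fintype.card V ∨ 4 * δ ≤ c + 2 * κ := by
  classical
  have hL := hX.lg
  by_cases hall : ∀ v, ∃ i, f i = v
  · left
    rw [← hL.cyc.card_Cs, ← Finset.card_univ]
    congr 1
    ext v; simp [hL.cyc.mem_Cs, hall v]
  right
  push Not at hall
  obtain ⟨v0, hv0⟩ := hall
  obtain ⟨H, _, hH⟩ := exists_cmp (G := G) (f := f) (Finset.univ.filter (fun v => ∀ i, f i ≠ v)) ⟨v0, by simpa using hv0⟩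
    (by intro v hv; simpa using hv)
    (by
      intro v _ w _
      by_cases h : ∃ i, f i = w
      · exact Or.inr h
      · push Not at h; left; simpa using h)
  rcases hH.pair hX with h8 | ⟨x, y, X, rfl, hp⟩
  · omega
  by_cases hall2 : ∀ v, (∃ i, f i = v) ∨ v = x ∨ v = y
  · have hXne : X.Nonempty := by
      rw [Finset.nonempty_iff_ne_empty]; rintro rfl
      have h1 := hX.kc ∅ {x, y} (by simp) ⟨x, by simp⟩ (by simp) ⟨f 0, by
        have a := hp.ofx 0; have b := hp.ofy 0; simp [a, b], by simp⟩
      obtain ⟨a, ha, b, hb, _, hab⟩ := h1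
      simp at ha hb
      rcases ha with rfl | rfl
      · rcases hp.clx b hab with h | h
        · exact hb.2 h
        · simp at h
      · rcases hp.cly b hab with h | h
        · exact hb.1 h
        · simp at h
    obtain ⟨u, hu⟩ := hXne
    obtain ⟨p, rfl⟩ := hp.inC u hu
    have hp1 := hp.sp1 hL hu
    have hκX : κ ≤ X.card := by
      by_contra hlt
      push Not at hlt
      obtain ⟨a, ha, b, hb, hbX, hab⟩ := hkc X {x, y} hlt ⟨x, by simp⟩
        (by
          rw [Finset.disjoint_left]; intro a ha haX
          obtain ⟨i, hi⟩ := hp.inC a haX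
          exact hp.off a ha i hi)
        ⟨f (p+1), by have a := hp.ofx (p+1); have b := hp.ofy (p+1); simp [a, b], hp1⟩
      simp at ha hb
      rcases ha with rfl | rfl
      · rcases hp.clx b hab with h | h
        · exact hb.2 h
        · exact hbX h
      · rcases hp.cly b hab with h | h
        · exact hb.1 h
        · exact hbX h
    have h3 := Finset.card_le_card (hp.sub3 hL)
    rw [hp.card3 hL] at h3
    have h4 := Finset.card_le_univ (Cs f c)
    obtain ⟨S, A, B, hS, hSk⟩ := sep_of_not hn (by omega)
    exact case3b hX hp hall2 hS hκ hSk
  · push Not at hall2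
    obtain ⟨v1, hv1, hv1x, hv1y⟩ := hall2
    obtain ⟨H', hsub, hH'⟩ := exists_cmp (G := G) (f := f)
      (Finset.univ.filter (fun v => (∀ i, f i ≠ v) ∧ v ≠ x ∧ v ≠ y)) ⟨v1, by simpa using ⟨hv1, hv1x, hv1y⟩⟩
      (by intro v hv; simp only [Finset.mem_filter] at hv; exact hv.2.1)
      (by
        intro v hv w hvw
        simp only [Finset.mem_filter] at hv
        obtain ⟨_, hv, hvx, hvy⟩ := hv
        by_cases h : ∃ i, f i = w
        · exact Or.inr h
        · push Not at h
          left
          refine Finset.mem_filter.2 ⟨Finset.mem_univ _, h, ?_, ?_⟩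
          · rintro rfl
            rcases hp.clx v hvw.symm with h | h
            · exact hvy h
            · obtain ⟨i, hi⟩ := hp.inC v h; exact hv i hi
          · rintro rfl
            rcases hp.cly v hvw.symm with h | h
            · exact hvx h
            · obtain ⟨i, hi⟩ := hp.inC v h; exact hv i hi)
    rcases hH'.pair hX with h8 | ⟨z, w, Y, rfl, hq⟩
    · omega
    · have := case3a hX hp hq (by
        rw [Finset.disjoint_left]
        intro a ha ha'
        have := hsub ha'
        simp only [Finset.mem_filter] at this
        simp at ha
        rcases ha with rfl | rfl
        · exact this.2.2.1 rfl
        · exact this.2.2.2 rfl)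
      omega

end Nik

theorem nikoghosyan_1985_circumference (G : SimpleGraph V) [Fintype V] [DecidableRel G.Adj]
    (h4 : KConnected G 4)
    (hα : indepNumber G ≤ G.minDegree) :
    (circumference G : ℤ) ≥
      min (Fintype.card V : ℤ) (4 * G.minDegree - 2 * connectivity G) := by
  classical
  have hbdd : BddAbove {k | KConnected G k} := ⟨Fintype.card V, fun k hk => hk.1.le⟩
  have hk4 : 4 ≤ connectivity G := le_csSup hbdd h4
  have hmem : KConnected G (connectivity G) := Nat.sSup_mem ⟨4, h4⟩ hbdd
  have hnot : ¬ KConnected G (connectivity G + 1) := fun h => by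
    have : connectivity G + 1 ≤ connectivity G := le_csSup hbdd h
    omega
  obtain ⟨f, c, hL, l, hl, hlc⟩ := Nik.exists_lg (Nik.exists_cl h4.1 (Nik.kc_of_conn h4))
  have hcc := Nik.cl_le_circ hl
  have hX : Nik.Ctx G f c G.minDegree := by
    refine ⟨hL, Nik.kc_of_conn h4, ?_, ?_⟩
    · intro s hs
      refine le_trans ?_ hα
      refine le_csSup ⟨Fintype.card V, ?_⟩ ⟨s, hs, rfl⟩
      rintro k ⟨s, _, rfl⟩
      exact Finset.card_le_univ s
    · intro v T hT
      refine (G.minDegree_le_degree v).trans (Finset.card_le_card ?_)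
      intro w hw
      exact hT w (by simpa using hw)
  rcases Nik.main hX hk4 (Nik.kc_of_conn hmem) hnot with h | h
  · exact min_le_of_left_le (by exact_mod_cast (by omega : Fintype.card V ≤ circumference G))
  · refine min_le_of_right_le ?_
    have : c ≤ circumference G := by omega
    have h' : (4 * G.minDegree : ℤ) ≤ c + 2 * connectivity G := by exact_mod_cast h
    have h'' : (c : ℤ) ≤ circumference G := by exact_mod_cast this
    linarith
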